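/- Fix N ≥ 1 and 1 ≤ n ≤ N. Suppose (s,x) ↦ R^{HSE,s}(x) is a jointly measurable function on (0,∞)×ℝⁿ such that for each s > 0, the function R^{HSE,s} is a density with respect to Lebesgue measure on ℝⁿ of the n-point correlation measure of a random matrix distributed according to ν_N^s. For x ∈ ℝⁿ define q_{N²}(v;x) = R^{HSE, 1/N + v√2/N²}(x)·√2·γ_{N²,1/N}(N + v√2) for v > −N/√2 and q_{N²}(v;x) = 0 otherwise. Then for Lebesgue-almost every x = (x₁,…,x_n) ∈ ℝⁿ and every p ∈ ℝ: ∫_ℝ e^{ipv}·q_{N²}(v;x) dv = φ_{N²}(p)·det( K̃_N(x_i, x_j, 1/((1−ip√2/N)·N)) )_{i,j=1}^n. -/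

import Mathlib

open MeasureTheory Real

noncomputable section

instance matrixMeasurableSpace (N : ℕ) : MeasurableSpace (Matrix (Fin N) (Fin N) ℂ) :=
  inferInstanceAs (MeasurableSpace (Fin N → Fin N → ℂ))

abbrev HermMat (N : ℕ) := selfAdjoint (Matrix (Fin N) (Fin N) ℂ)

lemma HermMat.isHermitian {N : ℕ} (A : HermMat N) :
    (A : Matrix (Fin N) (Fin N) ℂ).IsHermitian := A.2

def eig {N : ℕ} (A : HermMat N) : Fin N → ℝ := (HermMat.isHermitian A).eigenvalues

def trSq {N : ℕ} (A : HermMat N) : ℝ :=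
  (Matrix.trace ((A : Matrix (Fin N) (Fin N) ℂ) * (A : Matrix (Fin N) (Fin N) ℂ))).re

def corrMass (n : ℕ) {N : ℕ} (μ : Measure (HermMat N)) (B : Set (Fin n → ℝ)) : ℝ :=
  ∫ A, (Nat.card {σ : Fin n → Fin N //
      Function.Injective σ ∧ (fun i => eig A (σ i)) ∈ B} : ℝ) ∂μ

def OrthoInvariant {N : ℕ} (ν : Measure (HermMat N)) : Prop :=
  ∀ T : HermMat N ≃ₗ[ℝ] HermMat N,
    (∀ A B : HermMat N,
      (Matrix.trace ((T A : Matrix (Fin N) (Fin N) ℂ) * (T B : Matrix (Fin N) (Fin N) ℂ))).re =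
      (Matrix.trace ((A : Matrix (Fin N) (Fin N) ℂ) * (B : Matrix (Fin N) (Fin N) ℂ))).re) →
    Measure.map T ν = ν

def IsHSE {N : ℕ} (s : ℝ) (ν : Measure (HermMat N)) : Prop :=
  IsProbabilityMeasure ν ∧ ν {A : HermMat N | trSq A ≠ s * N ^ 2} = 0 ∧ OrthoInvariant ν

/-- The monic (probabilists') Hermite polynomial, evaluated at a complex number. -/
def hermiteH (k : ℕ) (z : ℂ) : ℂ := Polynomial.aeval z (Polynomial.hermite k)

/-- The normalized Hermite polynomial `p_k = H_k / ((2π)^{1/4} (k!)^{1/2})`. -/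
def hermiteP (k : ℕ) (z : ℂ) : ℂ :=
  hermiteH k z / (((2 * π) ^ ((1:ℝ)/4) * Real.sqrt (Nat.factorial k) : ℝ) : ℂ)

/-- The Hermite function `φ_k(z) = p_k(z) exp(−z²/4)`. -/
def hermitePhi (k : ℕ) (z : ℂ) : ℂ := hermiteP k z * Complex.exp (-(z ^ 2) / 4)

/-- The Hermite reproducing kernel `K_N`. -/
def kernelK (N : ℕ) (z₁ z₂ : ℂ) : ℂ :=
  ∑ k ∈ Finset.range N, hermitePhi k z₁ * hermitePhi k z₂

/-- The rescaled kernel `K̃_N(z₁,z₂,s) = s^{−1/2} K_N(z₁ s^{−1/2}, z₂ s^{−1/2})`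
(principal powers). -/
def kernelKt (N : ℕ) (z₁ z₂ s : ℂ) : ℂ :=
  s ^ (-(1:ℂ)/2) * kernelK N (z₁ * s ^ (-(1:ℂ)/2)) (z₂ * s ^ (-(1:ℂ)/2))

/-- The chi-square density with `m` degrees of freedom. -/
def chiSqPDF (m : ℕ) (u : ℝ) : ℝ :=
  if 0 < u then (2 ^ ((m : ℝ) / 2) * Real.Gamma ((m : ℝ) / 2))⁻¹ *
    u ^ ((m : ℝ) / 2 - 1) * Real.exp (-u / 2) else 0

/-- The rescaled chi-square density `γ_{m,s}(u) = s⁻¹ γ_m(u/s)`. -/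
def chiSqPDFscaled (m : ℕ) (s u : ℝ) : ℝ := s⁻¹ * chiSqPDF m (u / s)

/-- `φ_{N²}(p) = exp(−ipN/√2) (1 − ip√2/N)^{−N²/2}`, the characteristic function of the
normalized chi-square variable `(T − N²)/√(2N²)`. -/
def chiCharFun (N : ℕ) (p : ℝ) : ℂ :=
  Complex.exp (-Complex.I * p * N / Real.sqrt 2) *
    (1 - Complex.I * p * Real.sqrt 2 / N) ^ (-(N : ℂ) ^ 2 / 2)

section
open MeasureTheory ProbabilityTheory


/-- standard Gaussian on `ι → ℝ` -/
def gs (ι : Type*) [Fintype ι] : Measure (ι → ℝ) := Measure.pi (fun _ => gaussianReal 0 1)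

instance gs_prob (ι : Type*) [Fintype ι] : IsProbabilityMeasure (gs ι) := by
  unfold gs; infer_instance

/-- complex evaluation at a real point -/
def cev {ι : Type*} (x : ι → ℝ) : MvPolynomial ι ℂ →ₐ[ℂ] ℂ := MvPolynomial.aeval (fun i => (x i : ℂ))

lemma cev_cont {ι : Type*} [Fintype ι] (P : MvPolynomial ι ℂ) : Continuous (fun x : ι → ℝ => cev x P) := by
  induction P using MvPolynomial.induction_on with
  | C a => simp only [cev, MvPolynomial.aeval_C]; fun_prop
  | add p q hp hq => simp only [map_add]; fun_prop
  | mul_X p i hp => simp only [map_mul, cev, MvPolynomial.aeval_X] at hp ⊢; fun_prop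

lemma gauss1_int (k : ℕ) (c : ℝ) :
    Integrable (fun x : ℝ => |x| ^ k * Real.exp (c * |x|)) (gaussianReal 0 1) := by
  have key : ∀ d : ℝ, Integrable (fun x : ℝ => |x| ^ k * Real.exp (d * x)) (gaussianReal 0 1) := by
    intro d
    have := integrable_pow_abs_mul_exp_of_mem_interior_integrableExpSet (X := id)
      (μ := gaussianReal 0 1) (v := d) (by simp [integrableExpSet_id_gaussianReal]) k
    simpa using this
  refine ((key c).add (key (-c))).mono' (by fun_prop) (Filter.Eventually.of_forall fun x => ?_)
  simp only [norm_mul, norm_pow, Real.norm_eq_abs, abs_abs, Real.abs_exp, Pi.add_apply]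
  rw [← mul_add]
  gcongr
  rcases abs_cases x with ⟨h, _⟩ | ⟨h, _⟩ <;> rw [h]
  · linarith [Real.exp_pos (-c * x)]
  · rw [show c * -x = -c * x by ring]; linarith [Real.exp_pos (c * x)]

lemma gs_int_mono {ι : Type*} [Fintype ι] (m : ι → ℕ) (c : ℝ) :
    Integrable (fun x : ι → ℝ => ∏ i, (|x i| ^ m i * Real.exp (c * |x i|))) (gs ι) := by
  unfold gs
  exact Integrable.fintype_prod (f := fun i x => |x| ^ m i * Real.exp (c * |x|))
    (fun i => gauss1_int (m i) c)

lemma gs_int_exp {ι : Type*} [Fintype ι] (P : MvPolynomial ι ℂ) (c : ℝ) :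
    Integrable (fun x : ι → ℝ => cev x P * (Real.exp (c * ∑ i, |x i|) : ℝ)) (gs ι) := by
  induction P using MvPolynomial.monomial_add_induction_on with
  | C a =>
    have h := ((gs_int_mono (ι := ι) (fun _ => 0) c).ofReal (𝕜 := ℂ)).const_mul a
    refine h.congr (Filter.Eventually.of_forall fun x => ?_)
    simp [cev, Finset.mul_sum, Real.exp_sum]
  | monomial_add m a p _ _ ih =>
    simp only [map_add, add_mul]
    refine Integrable.add ?_ ih
    refine ((gs_int_mono (ι := ι) m c).const_mul ‖a‖).mono' ?_ (Filter.Eventually.of_forall fun x => ?_)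
    · have := cev_cont (MvPolynomial.monomial m a)
      fun_prop
    · simp only [cev, MvPolynomial.aeval_monomial, norm_mul, Finset.prod_mul_distrib, Finset.mul_sum, Real.exp_sum]
      rw [Finsupp.prod_fintype _ _ (by simp)]
      have he : ∀ b, ‖Complex.exp ((c : ℂ) * (|x b| : ℝ))‖ = Real.exp (c * |x b|) := by
        intro b; rw [Complex.norm_exp]; congr 1; rw [← Complex.ofReal_mul, Complex.ofReal_re]
      simp [norm_prod, mul_assoc, he]

lemma gs_int {ι : Type*} [Fintype ι] (P : MvPolynomial ι ℂ) :
    Integrable (fun x : ι → ℝ => cev x P) (gs ι) := by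
  simpa using gs_int_exp P 0

/-- Gaussian expectation functional -/
def EG (ι : Type*) [Fintype ι] : MvPolynomial ι ℂ →ₗ[ℂ] ℂ where
  toFun P := ∫ x, cev x P ∂(gs ι)
  map_add' P Q := by
    simp only [map_add]; exact integral_add (gs_int P) (gs_int Q)
  map_smul' a P := by
    simp only [map_smul, smul_eq_mul, RingHom.id_apply]; exact integral_const_mul _ _

lemma EG_one (ι : Type*) [Fintype ι] : EG ι 1 = 1 := by
  simp [EG]

lemma gauss1_moment (k : ℕ) :
    ∫ x : ℝ, (x : ℂ) ^ (k + 1) ∂(gaussianReal 0 1) = k * ∫ x : ℝ, (x : ℂ) ^ (k - 1) ∂(gaussianReal 0 1) := by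
  have hi : ∀ j : ℕ, Integrable (fun x : ℝ => (gaussianPDFReal 0 1 x) * x ^ j) := by
    intro j
    have := gauss1_int j 0
    rw [gaussianReal_of_var_ne_zero _ (by simp), gaussianPDF_def,
      integrable_withDensity_iff_integrable_smul₀' (by fun_prop) (by simp)] at this
    simp only [zero_mul, Real.exp_zero, mul_one, ENNReal.toReal_ofReal (gaussianPDFReal_nonneg 0 1 _), smul_eq_mul] at this
    refine this.mono (by fun_prop) (Filter.Eventually.of_forall fun x => ?_)
    simp
  have hr : ∀ j : ℕ, ∫ x : ℝ, (x : ℂ) ^ j ∂(gaussianReal 0 1) = ((∫ x : ℝ, (gaussianPDFReal 0 1 x) * x ^ j : ℝ) : ℂ) := by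
    intro j
    rw [integral_gaussianReal_eq_integral_smul (by simp), ← integral_complex_ofReal]
    simp
  rw [hr, hr]
  norm_cast
  have hd : ∀ x : ℝ, HasDerivAt (gaussianPDFReal 0 1) (- x * gaussianPDFReal 0 1 x) x := by
    intro x
    simp only [gaussianPDFReal_def]
    have h1 : HasDerivAt (fun x : ℝ => - (x - 0) ^ 2 / (2 * ((1 : NNReal) : ℝ))) (-x) x := by
      have := (((hasDerivAt_id x).sub_const 0).pow 2).neg.div_const (2 * ((1 : NNReal) : ℝ))
      refine this.congr_deriv ?_
      norm_num
      ring
    have := h1.exp.const_mul ((√(2 * Real.pi * ((1 : NNReal) : ℝ)))⁻¹)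
    refine this.congr_deriv ?_
    ring
  have := integral_mul_deriv_eq_deriv_mul_of_integrable (u := fun x : ℝ => x ^ k) (u' := fun x => k * x ^ (k-1))
    (v := gaussianPDFReal 0 1) (v' := fun x => - x * gaussianPDFReal 0 1 x)
    (fun x _ => hasDerivAt_pow k x) (fun x _ => hd x)
    ((hi (k+1)).neg.congr (Filter.Eventually.of_forall fun x => by simp only [Pi.mul_apply, Pi.neg_apply]; ring))
    (((hi (k-1)).const_mul (k:ℝ)).congr (Filter.Eventually.of_forall fun x => by simp only [Pi.mul_apply, Pi.neg_apply]; ring))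
    ((hi k).congr (Filter.Eventually.of_forall fun x => by simp only [Pi.mul_apply, Pi.neg_apply]; ring))
  rw [← integral_const_mul]
  have e1 : ∫ x : ℝ, gaussianPDFReal 0 1 x * x ^ (k+1) = - ∫ x : ℝ, x ^ k * (-x * gaussianPDFReal 0 1 x) := by
    rw [← integral_neg]; congr 1; ext x; ring
  rw [e1, this, neg_neg]; congr 1; ext x; ring

lemma EG_monomial {ι : Type*} [Fintype ι] (m : ι →₀ ℕ) (a : ℂ) :
    EG ι (MvPolynomial.monomial m a) = a * ∏ i, ∫ x : ℝ, (x : ℂ) ^ (m i) ∂(gaussianReal 0 1) := by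
  simp only [EG, LinearMap.coe_mk, AddHom.coe_mk, cev, MvPolynomial.aeval_monomial]
  rw [← integral_fintype_prod_eq_prod (f := fun i (x : ℝ) => (x : ℂ) ^ (m i))]
  rw [← integral_const_mul]
  congr 1; ext x
  rw [Finsupp.prod_fintype _ _ (by simp)]; simp

lemma EG_stein {ι : Type*} [Fintype ι] [DecidableEq ι] (i : ι) (P : MvPolynomial ι ℂ) :
    EG ι (MvPolynomial.X i * P) = EG ι (MvPolynomial.pderiv i P) := by
  induction P using MvPolynomial.induction_on' with
  | add p q hp hq => simp only [mul_add, map_add, hp, hq]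
  | monomial m a =>
    rw [MvPolynomial.X, MvPolynomial.monomial_mul, MvPolynomial.pderiv_monomial, EG_monomial, EG_monomial]
    rw [← Finset.mul_prod_erase _ _ (Finset.mem_univ i), ← Finset.mul_prod_erase (a := i) _ _ (Finset.mem_univ i)]
    have h1 : ∀ j ∈ Finset.univ.erase i, ∫ x : ℝ, (x : ℂ) ^ ((Finsupp.single i 1 + m : ι →₀ ℕ) j) ∂(gaussianReal 0 1)
      = ∫ x : ℝ, (x : ℂ) ^ ((m - Finsupp.single i 1 : ι →₀ ℕ) j) ∂(gaussianReal 0 1) := by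
      intro j hj
      have : i ≠ j := (Finset.ne_of_mem_erase hj).symm
      simp [Finsupp.single_apply, this]
    rw [Finset.prod_congr rfl h1]
    have h2 := gauss1_moment (m i)
    simp only [Finsupp.add_apply, Finsupp.single_apply, if_true, Finsupp.tsub_apply, add_comm 1 (m i)]
    rw [h2]; ring

end

section
open MeasureTheory ProbabilityTheory MvPolynomial


def loopD (k : ℕ) : Derivation ℂ (MvPolynomial ℕ ℂ) (MvPolynomial ℕ ℂ) :=
  MvPolynomial.mkDerivation ℂ (fun m => (m : ℂ) • (X (k + m - 1) : MvPolynomial ℕ ℂ))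

def lprod (s : List ℕ) : MvPolynomial ℕ ℂ := (s.map (fun m => (X m : MvPolynomial ℕ ℂ))).prod

def lwt (s : List ℕ) : ℕ := (s.map (· + 1)).sum

def lW (d : ℕ) : Submodule ℂ (MvPolynomial ℕ ℂ) := Submodule.span ℂ {P | ∃ s, lwt s < d ∧ lprod s = P}

lemma lW_mul_X (m d : ℕ) (P : MvPolynomial ℕ ℂ) (hP : P ∈ lW d) : X m * P ∈ lW (d + m + 1) := by
  induction hP using Submodule.span_induction with
  | mem P h =>
    obtain ⟨s, hs, rfl⟩ := h
    refine Submodule.subset_span ⟨m :: s, ?_, ?_⟩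
    · simp only [lwt, List.map_cons, List.sum_cons] at *; omega
    · simp [lprod]
  | zero => simp
  | add P Q _ _ hp hq => rw [mul_add]; exact Submodule.add_mem _ hp hq
  | smul a P _ hp => rw [mul_smul_comm]; exact Submodule.smul_mem _ _ hp

lemma loopD_mem (k : ℕ) (s : List ℕ) : loopD k (lprod s) ∈ lW (lwt s + k) := by
  induction s with
  | nil => simp [lprod]
  | cons m s ih =>
    have : lprod (m :: s) = X m * lprod s := by simp [lprod]
    rw [this, Derivation.leibniz]
    refine Submodule.add_mem _ ?_ ?_
    · have := lW_mul_X m _ _ ih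
      rw [smul_eq_mul]
      convert this using 2
      simp only [lwt, List.map_cons, List.sum_cons]; omega
    · rw [loopD, mkDerivation_X, smul_eq_mul, mul_smul_comm]
      rcases Nat.eq_zero_or_pos m with rfl | hm
      · simp
      · refine Submodule.smul_mem _ _ (Submodule.subset_span ⟨(k + m - 1) :: s, ?_, ?_⟩)
        · simp only [lwt, List.map_cons, List.sum_cons]; omega
        · simp [lprod, mul_comm]

lemma loop_unique (M : MvPolynomial ℕ ℂ →ₗ[ℂ] ℂ) (c : ℂ)
    (h0 : ∀ F, M (X 0 * F) = c * M F)
    (hS : ∀ k F, M (X (k + 1) * F) =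
      M ((∑ l ∈ Finset.range k, X l * X (k - 1 - l)) * F + loopD k F))
    (h1 : M 1 = 0) : M = 0 := by
  have key : ∀ d, ∀ s, lwt s < d → M (lprod s) = 0 := by
    intro d
    induction d with
    | zero => intro s h; omega
    | succ d ih =>
      have hW : ∀ P ∈ lW d, M P = 0 := by
        intro P hP
        induction hP using Submodule.span_induction with
        | mem P h => obtain ⟨s, hs, rfl⟩ := h; exact ih s hs
        | zero => simp
        | add P Q _ _ hp hq => simp [hp, hq]
        | smul a P _ hp => simp [hp]
      intro s hs
      match s with
      | [] => simpa [lprod] using h1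
      | 0 :: s =>
        have : lprod (0 :: s) = X 0 * lprod s := by simp [lprod]
        rw [this, h0, ih s, mul_zero]
        simp only [lwt, List.map_cons, List.sum_cons] at hs ⊢; omega
      | (k+1) :: s =>
        have : lprod ((k+1) :: s) = X (k+1) * lprod s := by simp [lprod]
        rw [this, hS]
        simp only [lwt, List.map_cons, List.sum_cons] at hs
        rw [map_add, Finset.sum_mul, map_sum]
        rw [hW _ ?_, add_zero]
        · refine Finset.sum_eq_zero fun l hl => ?_
          have hl := Finset.mem_range.1 hl
          have : X l * X (k - 1 - l) * lprod s = lprod (l :: (k-1-l) :: s) := by simp [lprod, mul_assoc]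
          rw [this]
          apply ih
          simp only [lwt, List.map_cons, List.sum_cons]; omega
        · have := loopD_mem k s
          refine Submodule.span_mono ?_ this
          rintro P ⟨t, ht, rfl⟩
          refine ⟨t, ?_, rfl⟩
          simp only [lwt] at ht ⊢; omega
  ext m
  simp only [LinearMap.zero_comp, LinearMap.zero_apply, LinearMap.comp_apply]
  have hl : ∃ s, lprod s = monomial m (1:ℂ) := by
    induction m using Finsupp.induction_linear with
    | zero => exact ⟨[], by simp [lprod]⟩
    | add f g hf hg =>
      obtain ⟨s, hs⟩ := hf; obtain ⟨t, ht⟩ := hg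
      refine ⟨s ++ t, ?_⟩
      simp only [lprod, List.map_append, List.prod_append] at *
      rw [hs, ht, monomial_mul, one_mul]
    | single a b =>
      refine ⟨List.replicate b a, ?_⟩
      simp [lprod, X_pow_eq_monomial]
  obtain ⟨s, hs⟩ := hl
  change M (monomial m 1) = 0
  rw [← hs]
  exact key _ s (Nat.lt_succ_self _)

/-- two solutions of the loop equations are proportional -/
lemma loop_prop (M M' : MvPolynomial ℕ ℂ →ₗ[ℂ] ℂ) (c : ℂ)
    (h0 : ∀ F, M (X 0 * F) = c * M F)
    (hS : ∀ k F, M (X (k + 1) * F) =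
      M ((∑ l ∈ Finset.range k, X l * X (k - 1 - l)) * F + loopD k F))
    (h0' : ∀ F, M' (X 0 * F) = c * M' F)
    (hS' : ∀ k F, M' (X (k + 1) * F) =
      M' ((∑ l ∈ Finset.range k, X l * X (k - 1 - l)) * F + loopD k F))
    (h1 : M 1 = 1) (F) : M' F = M' 1 * M F := by
  have := loop_unique (M' - M' 1 • M) c
    (by intro F; simp only [LinearMap.sub_apply, LinearMap.smul_apply, h0, h0', smul_eq_mul]; ring)
    (by intro k F; simp only [LinearMap.sub_apply, LinearMap.smul_apply, hS, hS'])
    (by simp [h1])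
  have := congrArg (fun f => f F) this
  simpa [sub_eq_zero] using this

/-- general setup -/
lemma loop_of_deriv {S : Type*} [CommRing S] [Algebra ℂ S] (T : ℕ → S) (D : ℕ → Derivation ℂ S S)
    (Λ : S →ₗ[ℂ] ℂ) (hD : ∀ k m, D k (T m) = (m : ℂ) • T (k + m - 1))
    (hΛ : ∀ k f, Λ (T (k + 1) * f) = Λ ((∑ l ∈ Finset.range k, T l * T (k - 1 - l)) * f + D k f))
    (k : ℕ) (F : MvPolynomial ℕ ℂ) :
    (Λ ∘ₗ (aeval T).toLinearMap) (X (k + 1) * F) =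
      (Λ ∘ₗ (aeval T).toLinearMap) ((∑ l ∈ Finset.range k, X l * X (k - 1 - l)) * F + loopD k F) := by
  have hd : aeval T (loopD k F) = D k (aeval T F) := by
    induction F using MvPolynomial.induction_on with
    | C a => simp only [← algebraMap_eq, Derivation.map_algebraMap, map_zero, AlgHom.commutes]
    | add p q hp hq => simp only [map_add, hp, hq]
    | mul_X p i hp =>
      simp only [Derivation.leibniz, map_add, map_mul, smul_eq_mul, hp, aeval_X]
      simp only [loopD, mkDerivation_X, map_smul, aeval_X, hD]
  simp only [LinearMap.comp_apply, AlgHom.toLinearMap_apply, map_mul, map_add, aeval_X, hΛ, hd, map_sum]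

end

section
open MeasureTheory ProbabilityTheory MvPolynomial


def cα : ℂ := (1 + Complex.I) / 2
def cβ : ℂ := (1 - Complex.I) / 2

lemma cαα : cα * cα + cβ * cβ = 0 := by
  simp only [cα, cβ]; ring_nf; simp
lemma cαβ : 2 * (cα * cβ) = 1 := by
  simp only [cα, cβ]; ring_nf; simp; norm_num

def MA (N : ℕ) : Matrix (Fin N) (Fin N) (MvPolynomial (Fin N × Fin N) ℂ) :=
  Matrix.of fun i j => cα • X (i, j) + cβ • X (j, i)

def DM {N : ℕ} (i j : Fin N) : Derivation ℂ (MvPolynomial (Fin N × Fin N) ℂ) (MvPolynomial (Fin N × Fin N) ℂ) :=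
  cα • pderiv (i, j) + cβ • pderiv (j, i)

lemma DM_MA {N : ℕ} (i j k l : Fin N) : DM i j (MA N k l) =
    (1 : Matrix (Fin N) (Fin N) (MvPolynomial (Fin N × Fin N) ℂ)) k j *
    (1 : Matrix (Fin N) (Fin N) (MvPolynomial (Fin N × Fin N) ℂ)) i l := by
  have e : ∀ a b c d : Fin N, pderiv (a, b) (X (c, d) : MvPolynomial (Fin N × Fin N) ℂ) =
      if c = a ∧ d = b then 1 else 0 := by
    intro a b c d
    rw [pderiv_X, Pi.single_apply]; simp only [Prod.mk.injEq]
  simp only [DM, MA, Matrix.of_apply, map_add, Derivation.map_smul, Derivation.add_apply, Derivation.smul_apply, e,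
    Matrix.one_apply]
  have e1 : (if l = i ∧ k = j then (1 : MvPolynomial (Fin N × Fin N) ℂ) else 0) = if k = j ∧ l = i then 1 else 0 := by
    simp only [and_comm]
  have e2 : (if l = j ∧ k = i then (1 : MvPolynomial (Fin N × Fin N) ℂ) else 0) = if k = i ∧ l = j then 1 else 0 := by
    simp only [and_comm]
  have e3 : ((if k = j then (1 : MvPolynomial (Fin N × Fin N) ℂ) else 0) * if i = l then 1 else 0) = if k = j ∧ l = i then 1 else 0 := by
    rw [ite_and]; by_cases h : i = l <;> simp [h, eq_comm]
  rw [e1, e2, e3]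
  generalize (if k = i ∧ l = j then (1 : MvPolynomial (Fin N × Fin N) ℂ) else 0) = p
  generalize (if k = j ∧ l = i then (1 : MvPolynomial (Fin N × Fin N) ℂ) else 0) = q
  calc _ = (cα * cα + cβ * cβ) • p + (2 * (cα * cβ)) • q := by module
    _ = q := by rw [cαα, cαβ]; simp

lemma EG_MA {N : ℕ} (i j : Fin N) (f) : EG _ (MA N i j * f) = EG _ (DM i j f) := by
  simp only [MA, DM, Matrix.of_apply, add_mul, smul_mul_assoc, map_add, map_smul, EG_stein,
    Derivation.add_apply, Derivation.smul_apply]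

lemma DM_pow {N : ℕ} (i j k l : Fin N) (m : ℕ) : DM i j ((MA N ^ m) k l) =
    ∑ r ∈ Finset.range m, (MA N ^ r) k j * (MA N ^ (m - 1 - r)) i l := by
  induction m generalizing k l with
  | zero => 
    simp only [pow_zero, Matrix.one_apply, Finset.range_zero, Finset.sum_empty]
    split_ifs <;> simp
  | succ m ih =>
    rw [pow_succ, Matrix.mul_apply, map_sum]
    simp only [Derivation.leibniz, smul_eq_mul, ih, DM_MA]
    rw [Finset.sum_add_distrib, Finset.sum_range_succ, add_comm]
    congr 1
    · rw [Finset.sum_congr rfl (fun x _ => Finset.mul_sum _ _ _), Finset.sum_comm]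
      refine Finset.sum_congr rfl fun r hr => ?_
      have hr := Finset.mem_range.1 hr
      rw [show m + 1 - 1 - r = (m - 1 - r) + 1 by omega, pow_succ (MA N) (m-1-r), Matrix.mul_apply, Finset.mul_sum]
      refine Finset.sum_congr rfl fun a _ => ?_
      ring
    · simp [Matrix.one_apply]

def TM (N k : ℕ) : MvPolynomial (Fin N × Fin N) ℂ := (MA N ^ k).trace

def DMk (N k : ℕ) : Derivation ℂ (MvPolynomial (Fin N × Fin N) ℂ) (MvPolynomial (Fin N × Fin N) ℂ) :=
  ∑ i, ∑ j, (MA N ^ k) j i • DM i j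

lemma deriv_sum_apply {R S ι : Type*} [CommRing R] [CommRing S] [Algebra R S] (s : Finset ι)
    (D : ι → Derivation R S S) (f : S) : (∑ i ∈ s, D i) f = ∑ i ∈ s, D i f := by
  classical
  induction s using Finset.induction_on with
  | empty => simp
  | insert a s ha ih => rw [Finset.sum_insert ha, Finset.sum_insert ha, Derivation.add_apply, ih]

lemma DMk_apply (N k : ℕ) (f) : DMk N k f = ∑ i, ∑ j, (MA N ^ k) j i * DM i j f := by
  simp only [DMk, deriv_sum_apply, Derivation.smul_apply, smul_eq_mul]

lemma DMk_TM (N k m : ℕ) : DMk N k (TM N m) = (m : ℂ) • TM N (k + m - 1) := by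
  rw [DMk_apply]
  simp only [TM, Matrix.trace, Matrix.diag_apply, map_sum, DM_pow]
  have : ∀ i j : Fin N, ∑ a, ∑ r ∈ Finset.range m, (MA N ^ r) a j * (MA N ^ (m - 1 - r)) i a
      = m * (MA N ^ (m - 1)) i j := by
    intro i j
    rw [Finset.sum_comm]
    rw [Finset.sum_congr rfl (g := fun _ => (MA N ^ (m-1)) i j)]
    · simp
    · intro r hr
      have hr := Finset.mem_range.1 hr
      rw [show (MA N ^ (m-1)) = MA N ^ (m - 1 - r) * MA N ^ r by rw [← pow_add]; congr 1; omega, Matrix.mul_apply]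
      exact Finset.sum_congr rfl fun a _ => mul_comm _ _
  simp only [this]
  rcases Nat.eq_zero_or_pos m with rfl | hm
  · simp
  · rw [show k + m - 1 = k + (m-1) by omega, pow_add, Finset.sum_comm, Finset.smul_sum]
    refine Finset.sum_congr rfl fun i _ => ?_
    rw [Matrix.mul_apply, Finset.smul_sum]
    refine Finset.sum_congr rfl fun j _ => ?_
    rw [smul_eq_C_mul]; simp; ring

lemma EG_TM (N k : ℕ) (f) : EG _ (TM N (k + 1) * f) =
    EG _ ((∑ l ∈ Finset.range k, TM N l * TM N (k - 1 - l)) * f + DMk N k f) := by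
  have h1 : TM N (k+1) * f = ∑ i, ∑ j, MA N i j * ((MA N ^ k) j i * f) := by
    rw [TM, Matrix.trace, Finset.sum_mul]
    simp only [Matrix.diag_apply, pow_succ' (MA N), Matrix.mul_apply, Finset.sum_mul, mul_assoc]
  rw [h1]
  simp only [map_sum, EG_MA, Derivation.leibniz, map_add, smul_eq_mul, DM_pow]
  rw [DMk_apply]
  simp only [Finset.sum_add_distrib, map_sum]
  rw [add_comm]
  congr 1
  simp only [← map_sum]
  congr 1
  simp only [TM, Matrix.trace, Matrix.diag_apply, Finset.sum_mul_sum, Finset.sum_mul, Finset.mul_sum]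
  rw [Finset.sum_congr rfl (fun i _ => Finset.sum_comm), Finset.sum_comm]
  refine Finset.sum_congr rfl fun r _ => ?_
  refine Finset.sum_congr rfl fun i _ => Finset.sum_congr rfl fun j _ => ?_
  ring

/-! eigenvalue side -/

def TV (N k : ℕ) : MvPolynomial (Fin N) ℂ := ∑ i, X i ^ k

def DV (N k : ℕ) : Derivation ℂ (MvPolynomial (Fin N) ℂ) (MvPolynomial (Fin N) ℂ) :=
  ∑ i, (X i ^ k : MvPolynomial (Fin N) ℂ) • pderiv i

def VV (N : ℕ) : MvPolynomial (Fin N) ℂ := ∏ i, ∏ j ∈ Finset.Ioi i, (X j - X i)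

lemma DV_apply (N k : ℕ) (f) : DV N k f = ∑ i, X i ^ k * pderiv i f := by
  simp only [DV, deriv_sum_apply, Derivation.smul_apply, smul_eq_mul]

lemma DV_X (N k : ℕ) (i) : DV N k (X i) = X i ^ k := by
  rw [DV_apply]; simp [pderiv_X, Pi.single_apply]

lemma DV_TV (N k m : ℕ) : DV N k (TV N m) = (m : ℂ) • TV N (k + m - 1) := by
  simp only [TV, map_sum, Finset.smul_sum, Derivation.leibniz_pow, DV_X]
  refine Finset.sum_congr rfl fun i _ => ?_
  rcases Nat.eq_zero_or_pos m with rfl | hm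
  · simp
  · rw [show k + m - 1 = (m-1) + k by omega, pow_add, smul_eq_C_mul]; simp

lemma deriv_prod_log {R S ι : Type*} [CommRing R] [CommRing S] [Algebra R S] (D : Derivation R S S) (s : Finset ι)
    (f g : ι → S) (h : ∀ a ∈ s, D (f a) = f a * g a) : D (∏ a ∈ s, f a) = (∏ a ∈ s, f a) * ∑ a ∈ s, g a := by
  classical
  induction s using Finset.induction_on with
  | empty => simp
  | insert a s ha ih =>
    rw [Finset.prod_insert ha, Finset.sum_insert ha, Derivation.leibniz, ih (fun b hb => h b (Finset.mem_insert_of_mem hb)),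
      h a (Finset.mem_insert_self _ _)]
    simp only [smul_eq_mul]; ring

def hV (N k : ℕ) (i j : Fin N) : MvPolynomial (Fin N) ℂ := ∑ l ∈ Finset.range k, X i ^ l * X j ^ (k - 1 - l)

lemma DV_VV (N k : ℕ) : DV N k (VV N) = VV N * ∑ i, ∑ j ∈ Finset.Ioi i, hV N k j i := by
  unfold VV
  refine deriv_prod_log _ _ _ _ fun i _ => deriv_prod_log _ _ _ _ fun j _ => ?_
  rw [map_sub, DV_X, DV_X, mul_comm, hV, geom_sum₂_mul]

lemma hV_symm (N k : ℕ) (i j) : hV N k i j = hV N k j i := by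
  unfold hV
  rw [← Finset.sum_range_reflect]
  refine Finset.sum_congr rfl fun l hl => ?_
  have := Finset.mem_range.1 hl
  rw [mul_comm, show k - 1 - (k - 1 - l) = l by omega]

lemma hV_sum (N k : ℕ) : ∑ l ∈ Finset.range k, TV N l * TV N (k - 1 - l) =
    (∑ i, (k : MvPolynomial (Fin N) ℂ) * X i ^ (k - 1)) + 2 * ∑ i, ∑ j ∈ Finset.Ioi i, hV N k j i := by
  have h1 : ∑ l ∈ Finset.range k, TV N l * TV N (k - 1 - l) = ∑ i, ∑ j, hV N k i j := by
    simp only [TV, hV, Finset.sum_mul_sum]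
    rw [Finset.sum_comm]
    refine Finset.sum_congr rfl fun i _ => ?_
    rw [Finset.sum_comm]
  have h2 : ∀ i, ∑ j, hV N k i j = hV N k i i + ∑ j ∈ Finset.Ioi i, hV N k j i + ∑ j ∈ Finset.Iio i, hV N k j i := by
    intro i
    have : (Finset.univ : Finset (Fin N)) = insert i (Finset.Ioi i ∪ Finset.Iio i) := by
      ext j; have := lt_trichotomy i j; simp only [Finset.mem_univ, Finset.mem_insert, Finset.mem_union, Finset.mem_Ioi, Finset.mem_Iio, true_iff]; rcases this with h | h | h <;> simp_all
    rw [this, Finset.sum_insert (by simp), Finset.sum_union, add_assoc]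
    · rw [Finset.sum_congr rfl (fun j _ => hV_symm N k i j), Finset.sum_congr rfl (fun j _ => hV_symm N k i j)]
    · rw [Finset.disjoint_left]; intro a; simp; exact fun h => h.le
  have h3 : ∑ i, ∑ j ∈ Finset.Iio i, hV N k j i = ∑ i, ∑ j ∈ Finset.Ioi i, hV N k j i := by
    rw [Finset.sum_comm' (t' := Finset.univ) (s' := fun i => Finset.Ioi i) (by simp)]
    refine Finset.sum_congr rfl fun i _ => Finset.sum_congr rfl fun j _ => hV_symm _ _ _ _
  have h4 : ∀ i, hV N k i i = (k : MvPolynomial (Fin N) ℂ) * X i ^ (k - 1) := by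
    intro i
    unfold hV
    rw [Finset.sum_congr rfl (g := fun _ => X i ^ (k-1))]
    · simp
    · intro l hl
      have := Finset.mem_range.1 hl
      rw [← pow_add]; congr 1; omega
  rw [h1, Finset.sum_congr rfl (fun i _ => h2 i), Finset.sum_add_distrib, Finset.sum_add_distrib, h3]
  simp only [h4]; ring

def EV (N : ℕ) : MvPolynomial (Fin N) ℂ →ₗ[ℂ] ℂ := EG (Fin N) ∘ₗ LinearMap.mulLeft ℂ (VV N ^ 2)

lemma EV_apply (N : ℕ) (f) : EV N f = EG (Fin N) (VV N ^ 2 * f) := rfl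

lemma EV_TV (N k : ℕ) (f) : EV N (TV N (k + 1) * f) =
    EV N ((∑ l ∈ Finset.range k, TV N l * TV N (k - 1 - l)) * f + DV N k f) := by
  simp only [EV_apply]
  have h1 : VV N ^ 2 * (TV N (k+1) * f) = ∑ i, X i * (X i ^ k * (VV N ^ 2 * f)) := by
    simp only [TV, Finset.sum_mul, Finset.mul_sum, pow_succ]
    refine Finset.sum_congr rfl fun i _ => by ring
  have h2 : ∀ i g, pderiv i (X i ^ k * g) = (k : MvPolynomial (Fin N) ℂ) * X i ^ (k-1) * g + X i ^ k * pderiv i g := by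
    intro i g
    rw [Derivation.leibniz, Derivation.leibniz_pow, pderiv_X_self]; simp; ring
  rw [h1, map_sum, Finset.sum_congr rfl (fun i _ => EG_stein i _), ← map_sum]
  congr 1
  simp only [h2, Finset.sum_add_distrib]
  rw [← DV_apply, ← Finset.sum_mul, Derivation.leibniz, Derivation.leibniz_pow, DV_VV, hV_sum]
  simp only [smul_eq_mul, nsmul_eq_mul]
  push_cast
  ring

/-- The key moment identity. -/
lemma moment_key (N : ℕ) (F : MvPolynomial ℕ ℂ) :
    EV N (aeval (TV N) F) = EV N 1 * EG _ (aeval (TM N) F) := by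
  have := loop_prop (EG (Fin N × Fin N) ∘ₗ (aeval (TM N)).toLinearMap) (EV N ∘ₗ (aeval (TV N)).toLinearMap) (N : ℂ)
    (fun F => by
      have : TM N 0 = C (N:ℂ) := by simp [TM, Matrix.trace_one]
      simp only [LinearMap.comp_apply, AlgHom.toLinearMap_apply, map_mul, aeval_X, this, ← smul_eq_C_mul, map_smul, smul_eq_mul])
    (loop_of_deriv (TM N) (DMk N) _ (DMk_TM N) (EG_TM N))
    (fun F => by
      have : TV N 0 = C (N:ℂ) := by simp [TV]
      simp only [LinearMap.comp_apply, AlgHom.toLinearMap_apply, map_mul, aeval_X, this, ← smul_eq_C_mul, map_smul, smul_eq_mul])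
    (loop_of_deriv (TV N) (DV N) _ (DV_TV N) (EV_TV N))
    (by simp [EG_one]) F
  simpa using this

end

section
open MeasureTheory ProbabilityTheory


lemma trace_pow_eig {N : ℕ} (A : HermMat N) (k : ℕ) :
    ((A : Matrix (Fin N) (Fin N) ℂ) ^ k).trace = ∑ i, ((eig A i : ℂ)) ^ k := by
  have h := (HermMat.isHermitian A).spectral_theorem
  rw [h, ← map_pow, Unitary.conjStarAlgAut_apply, Matrix.trace_mul_cycle]
  simp only [Unitary.coe_star_mul_self, one_mul, Matrix.diagonal_pow, Matrix.trace_diagonal]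
  rfl

lemma trace_poly_eig {N : ℕ} (A : HermMat N) (p : Polynomial ℝ) :
    ∑ i, p.eval (eig A i) = (∑ k ∈ Finset.range (p.natDegree + 1), p.coeff k *
      (((A : Matrix (Fin N) (Fin N) ℂ) ^ k).trace).re) := by
  have : ∀ k, (((A : Matrix (Fin N) (Fin N) ℂ) ^ k).trace).re = ∑ i, (eig A i) ^ k := by
    intro k
    rw [trace_pow_eig]
    norm_cast
  simp only [this, Polynomial.eval_eq_sum_range, Finset.mul_sum]
  rw [Finset.sum_comm]

lemma meas_entry {N : ℕ} (i j : Fin N) : Measurable (fun A : HermMat N => (A : Matrix (Fin N) (Fin N) ℂ) i j) := by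
  have h1 : Measurable (fun A : HermMat N => (A : Matrix (Fin N) (Fin N) ℂ)) := measurable_subtype_coe
  have h2 : Measurable (fun M : Matrix (Fin N) (Fin N) ℂ => M i j) := by
    change Measurable (fun M : Fin N → Fin N → ℂ => M i j)
    fun_prop
  exact h2.comp h1

lemma meas_pow_entry {N : ℕ} (k : ℕ) (i j : Fin N) :
    Measurable (fun A : HermMat N => ((A : Matrix (Fin N) (Fin N) ℂ) ^ k) i j) := by
  induction k generalizing i j with
  | zero => simp only [pow_zero]; exact measurable_const
  | succ k ih =>
    simp only [pow_succ, Matrix.mul_apply]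
    exact Finset.measurable_sum _ fun l _ => (ih i l).mul (meas_entry l j)

lemma meas_tr_pow {N : ℕ} (k : ℕ) :
    Measurable (fun A : HermMat N => ((A : Matrix (Fin N) (Fin N) ℂ) ^ k).trace) := by
  simp only [Matrix.trace, Matrix.diag_apply]
  exact Finset.measurable_sum _ fun l _ => meas_pow_entry k l l

lemma meas_sum_poly {N : ℕ} (p : Polynomial ℝ) : Measurable (fun A : HermMat N => ∑ i, p.eval (eig A i)) := by
  simp only [trace_poly_eig]
  refine Finset.measurable_sum _ fun k _ => ?_
  exact measurable_const.mul (Complex.measurable_re.comp (meas_tr_pow k))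

lemma meas_sum_cont {N : ℕ} (g : ℝ → ℝ) (hg : Continuous g) : Measurable (fun A : HermMat N => ∑ i, g (eig A i)) := by
  have : ∀ m : ℕ, ∃ p : Polynomial ℝ, ∀ x ∈ Set.Icc (-(m:ℝ)) m, |p.eval x - g x| < 1 / (m + 1) := fun m =>
    exists_polynomial_near_of_continuousOn _ _ g hg.continuousOn _ (by positivity)
  choose p hp using this
  refine measurable_of_tendsto_metrizable (f := fun m => fun A : HermMat N => ∑ i, (p m).eval (eig A i))
    (fun m => meas_sum_poly (p m)) ?_
  rw [tendsto_pi_nhds]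
  intro A
  refine tendsto_finsetSum _ fun i _ => ?_
  rw [tendsto_iff_dist_tendsto_zero]
  refine squeeze_zero' (Filter.Eventually.of_forall fun _ => dist_nonneg) ?_ (tendsto_one_div_add_atTop_nhds_zero_nat (𝕜 := ℝ))
  filter_upwards [Filter.eventually_ge_atTop ⌈|eig A i|⌉₊] with m hm
  have := hp m (eig A i) (by rw [Set.mem_Icc, ← abs_le]; exact (Nat.le_ceil _).trans (by exact_mod_cast hm))
  rw [Real.dist_eq]; exact this.le

open Classical in
lemma meas_count {N : ℕ} (t : ℝ) : Measurable (fun A : HermMat N => ∑ i, if t ≤ eig A i then (1:ℝ) else 0) := by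
  refine measurable_of_tendsto_metrizable (f := fun m : ℕ => fun A : HermMat N => ∑ i, max 0 (min 1 (1 + m * (eig A i - t))))
    (fun m => meas_sum_cont (fun x => max 0 (min 1 (1 + m * (x - t)))) (by fun_prop)) ?_
  rw [tendsto_pi_nhds]
  intro A
  refine tendsto_finsetSum _ fun i _ => ?_
  split_ifs with h
  · refine tendsto_const_nhds.congr fun m => ?_
    have : (0:ℝ) ≤ m * (eig A i - t) := by have := sub_nonneg.2 h; positivity
    rw [min_eq_left (by linarith)]; simp
  · refine tendsto_const_nhds.congr' ?_
    push Not at h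
    have hp : 0 < t - eig A i := by linarith
    filter_upwards [Filter.eventually_ge_atTop ⌈1 / (t - eig A i)⌉₊] with m hm
    have : 1 / (t - eig A i) ≤ m := (Nat.le_ceil _).trans (by exact_mod_cast hm)
    rw [div_le_iff₀ hp] at this
    rw [max_eq_left]
    refine (min_le_right _ _).trans ?_
    linarith

lemma meas_eig {N : ℕ} (i : Fin N) : Measurable (fun A : HermMat N => eig A i) := by
  classical
  refine measurable_of_Ici fun t => ?_
  set e : Fin (Fintype.card (Fin N)) ≃ Fin N := Fintype.equivOfCardEq (Fintype.card_fin _) with he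
  have key : (fun A : HermMat N => eig A i) ⁻¹' Set.Ici t =
      {A | ((e.symm i : ℕ) : ℝ) + 1 ≤ ∑ i, if t ≤ eig A i then (1:ℝ) else 0} := by
    ext A
    simp only [Set.mem_preimage, Set.mem_Ici, Set.mem_setOf_eq]
    have hA := (HermMat.isHermitian A).eigenvalues₀_antitone
    have h0 : ∀ i, eig A i = (HermMat.isHermitian A).eigenvalues₀ (e.symm i) := fun i => rfl
    have h1 : (∑ i, if t ≤ eig A i then (1:ℝ) else 0) =
      ((Finset.univ.filter (fun k => t ≤ (HermMat.isHermitian A).eigenvalues₀ k)).card : ℝ) := by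
      rw [← Equiv.sum_comp e]
      simp [h0]
    rw [h1, h0]
    norm_cast
    constructor
    · intro h
      have : Finset.Iic (e.symm i) ⊆ Finset.univ.filter (fun k => t ≤ (HermMat.isHermitian A).eigenvalues₀ k) := by
        intro k hk
        simp only [Finset.mem_filter, Finset.mem_univ, true_and]
        exact h.trans (hA (Finset.mem_Iic.1 hk))
      simpa using Finset.card_le_card this
    · intro h
      by_contra h'
      have : Finset.univ.filter (fun k => t ≤ (HermMat.isHermitian A).eigenvalues₀ k) ⊆ Finset.Iio (e.symm i) := by
        intro k hk
        simp only [Finset.mem_filter, Finset.mem_univ, true_and] at hk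
        rw [Finset.mem_Iio]
        by_contra h''
        exact h' (hk.trans (hA (not_lt.1 h'')))
      have := Finset.card_le_card this
      rw [Fin.card_Iio] at this
      omega
  rw [key]
  exact measurableSet_le measurable_const (meas_count t)

lemma eig_sq_le {N : ℕ} (A : HermMat N) (i : Fin N) : (eig A i) ^ 2 ≤ trSq A := by
  have : trSq A = ∑ i, (eig A i) ^ 2 := by
    have := trace_pow_eig A 2
    rw [trSq, ← pow_two, this]; norm_cast
  rw [this]
  exact Finset.single_le_sum (f := fun i => eig A i ^ 2) (fun i _ => sq_nonneg _) (Finset.mem_univ i)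

/-! isometry between real matrices and Hermitian matrices -/

lemma conj_cα : (starRingEnd ℂ) cα = cβ := by
  simp only [cα, cβ, map_div₀, map_add, map_one, Complex.conj_I, map_ofNat]; ring
lemma conj_cβ : (starRingEnd ℂ) cβ = cα := by
  rw [← conj_cα]; simp

def herm {N : ℕ} (x : Fin N × Fin N → ℝ) : HermMat N :=
  ⟨Matrix.of fun i j => cα * x (i, j) + cβ * x (j, i), by
    rw [selfAdjoint.mem_iff]
    ext i j
    simp [Matrix.star_apply, conj_cα, conj_cβ, add_comm]⟩

lemma herm_apply {N : ℕ} (x : Fin N × Fin N → ℝ) (i j : Fin N) :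
   (herm x : Matrix (Fin N) (Fin N) ℂ) i j = cα * x (i, j) + cβ * x (j, i) := rfl

def hermL (N : ℕ) : EuclideanSpace ℝ (Fin N × Fin N) ≃ₗ[ℝ] HermMat N where
  toFun x := herm x.ofLp
  map_add' x y := by
    ext i j; simp [herm_apply]; ring
  map_smul' a x := by
    ext i j; simp [herm_apply]; ring
  invFun A := WithLp.toLp 2 fun p => ((A : Matrix (Fin N) (Fin N) ℂ) p.1 p.2).re + ((A : Matrix (Fin N) (Fin N) ℂ) p.1 p.2).im
  left_inv x := by
    ext p
    simp [herm_apply, cα, cβ]; ring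
  right_inv A := by
    ext i j
    have h : (A : Matrix (Fin N) (Fin N) ℂ) j i = (starRingEnd ℂ) ((A : Matrix (Fin N) (Fin N) ℂ) i j) := by
      exact ((HermMat.isHermitian A).apply j i).symm
    apply Complex.ext <;> simp [herm_apply, h, cα, cβ] <;> ring

lemma herm_tr {N : ℕ} (x y : EuclideanSpace ℝ (Fin N × Fin N)) :
    (Matrix.trace ((hermL N x : Matrix (Fin N) (Fin N) ℂ) * (hermL N y : Matrix (Fin N) (Fin N) ℂ))).re = inner ℝ x y := by
  have h : (Matrix.trace ((hermL N x : Matrix (Fin N) (Fin N) ℂ) * (hermL N y : Matrix (Fin N) (Fin N) ℂ))).re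
     = ∑ i, ∑ j, ((x (i,j) + x (j,i)) * (y (i,j) + y (j,i)) / 4 + (x (i,j) - x (j,i)) * (y (i,j) - y (j,i)) / 4) := by
    simp only [Matrix.trace, Matrix.diag_apply, Matrix.mul_apply, Complex.re_sum]
    refine Finset.sum_congr rfl fun i _ => Finset.sum_congr rfl fun j _ => ?_
    change ((cα * x (i, j) + cβ * x (j, i)) * (cα * y (j, i) + cβ * y (i, j))).re = _
    simp [cα, cβ]; ring
  rw [h]
  have h2 : ∀ i j, ((x (i,j) + x (j,i)) * (y (i,j) + y (j,i)) / 4 + (x (i,j) - x (j,i)) * (y (i,j) - y (j,i)) / 4) = 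
    x (i,j) * y (i,j) / 2 + x (j,i) * y (j,i) / 2 := by intro i j; ring
  simp only [h2, Finset.sum_add_distrib]
  rw [Finset.sum_comm (f := fun i j => x (j,i) * y (j,i) / 2), ← Finset.sum_add_distrib, PiLp.inner_apply, Fintype.sum_prod_type]
  refine Finset.sum_congr rfl fun i _ => ?_
  rw [← Finset.sum_add_distrib]
  refine Finset.sum_congr rfl fun j _ => ?_
  simp; ring

lemma herm_trSq {N : ℕ} (x : EuclideanSpace ℝ (Fin N × Fin N)) : trSq (hermL N x) = ‖x‖ ^ 2 := by
  rw [trSq, herm_tr, real_inner_self_eq_norm_sq]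

lemma meas_herm {N : ℕ} : Measurable (herm (N := N)) := by
  refine Measurable.subtype_mk ?_
  change Measurable (fun x : Fin N × Fin N → ℝ => (fun i j => cα * x (i, j) + cβ * x (j, i) : Fin N → Fin N → ℂ))
  fun_prop

lemma meas_hermL {N : ℕ} : Measurable (hermL N) := by
  change Measurable (fun x => herm (WithLp.ofLp x))
  exact meas_herm.comp (by fun_prop)

lemma meas_hermL_symm {N : ℕ} : Measurable (hermL N).symm := by
  change Measurable (fun A : HermMat N => WithLp.toLp 2 fun p : Fin N × Fin N => ((A : Matrix (Fin N) (Fin N) ℂ) p.1 p.2).re + ((A : Matrix (Fin N) (Fin N) ℂ) p.1 p.2).im)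
  have : Measurable (fun A : HermMat N => fun p : Fin N × Fin N => ((A : Matrix (Fin N) (Fin N) ℂ) p.1 p.2).re + ((A : Matrix (Fin N) (Fin N) ℂ) p.1 p.2).im) := by
    refine measurable_pi_lambda _ fun p => ?_
    exact (Complex.measurable_re.comp (meas_entry p.1 p.2)).add (Complex.measurable_im.comp (meas_entry p.1 p.2))
  exact (WithLp.measurable_toLp 2 _).comp this

lemma cev_TM {N : ℕ} (x : Fin N × Fin N → ℝ) (k : ℕ) :
    cev x (TM N k) = ∑ i, ((eig (herm x) i : ℂ)) ^ k := by
  rw [← trace_pow_eig]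
  have : (herm x : Matrix (Fin N) (Fin N) ℂ) = (cev x).toRingHom.mapMatrix (MA N) := by
    ext i j
    rw [herm_apply]
    simp [MA, cev]
  rw [this, ← map_pow, TM]
  simp [Matrix.trace, map_sum]

end

section
open MeasureTheory ProbabilityTheory MvPolynomial


open Matrix in
lemma bordered_reg {R : Type*} [CommRing R] {m : Type*} [Fintype m] [DecidableEq m]
    (M : Matrix m m R) (hM : M.det ∈ nonZeroDivisors R) (u : Matrix m Unit R) (v : Matrix Unit m R) (c : R) :
    (fromBlocks M u v (of fun _ _ => c)).det = c * M.det - (v * M.adjugate * u) () () := by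
  have h1 : fromBlocks M u v (of fun _ _ => c) * fromBlocks M.adjugate (-(M.adjugate * u)) 0 (of fun _ _ => M.det)
     = fromBlocks (M.det • 1) 0 (v * M.adjugate) (of fun _ _ => c * M.det - (v * M.adjugate * u) () ()) := by
    rw [fromBlocks_multiply]
    congr 1
    · simp [mul_adjugate]
    · rw [Matrix.mul_neg, ← Matrix.mul_assoc, mul_adjugate]
      ext i j
      simp [Matrix.mul_apply, mul_comm]
    · simp
    · ext i j
      rw [Matrix.mul_neg, ← Matrix.mul_assoc]
      simp [Matrix.mul_apply]; ring
  have h2 := congrArg Matrix.det h1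
  rw [det_mul, det_fromBlocks_zero₂₁, det_fromBlocks_zero₁₂] at h2
  have h3 : M.det * M.adjugate.det = M.det ^ Fintype.card m := by
    rw [← det_mul, mul_adjugate, det_smul]; simp
  simp only [det_smul, det_one, mul_one, det_unique, of_apply] at h2
  have h4 : M.det ^ Fintype.card m * (fromBlocks M u v (of fun _ _ => c)).det =
     M.det ^ Fintype.card m * (c * M.det - (v * M.adjugate * u) () ()) := by
    rw [← h2]
    nth_rw 1 [← h3]; ring
  exact (mem_nonZeroDivisors_iff_right.1 (pow_mem hM (Fintype.card m)) |> fun h => by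
    have := h ((fromBlocks M u v (of fun _ _ => c)).det - (c * M.det - (v * M.adjugate * u) () ())) (by
      linear_combination h4)
    exact sub_eq_zero.1 this)

open Matrix in
lemma bordered {R : Type*} [CommRing R] {m : Type*} [Fintype m] [DecidableEq m]
    (M : Matrix m m R) (u : Matrix m Unit R) (v : Matrix Unit m R) (c : R) :
    (fromBlocks M u v (of fun _ _ => c)).det = c * M.det - (v * M.adjugate * u) () () := by
  have hreg : (Matrix.charmatrix (-M)).det ∈ nonZeroDivisors (Polynomial R) :=
    (Matrix.charpoly_monic (-M)).mem_nonZeroDivisors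
  have h := bordered_reg (charmatrix (-M)) hreg (u.map Polynomial.C) (v.map Polynomial.C) (Polynomial.C c)
  have h2 := congrArg (Polynomial.evalRingHom (0:R)) h
  have e1 : (charmatrix (-M)).map (Polynomial.evalRingHom (0:R)) = M := by
    ext i j
    by_cases hij : i = j
    · subst hij; simp [charmatrix_apply_eq]
    · simp [charmatrix_apply_ne _ _ _ hij]
  have e2 : (u.map Polynomial.C).map (Polynomial.evalRingHom (0:R)) = u := by ext; simp
  have e3 : (v.map Polynomial.C).map (Polynomial.evalRingHom (0:R)) = v := by ext; simp
  rw [RingHom.map_det, map_sub, map_mul, RingHom.map_det, RingHom.mapMatrix_apply, RingHom.mapMatrix_apply, fromBlocks_map, e1, e2, e3] at h2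
  have e4 : ((v.map Polynomial.C * (charmatrix (-M)).adjugate * u.map Polynomial.C).map (Polynomial.evalRingHom (0:R))) = v * M.adjugate * u := by
    rw [Matrix.map_mul, Matrix.map_mul, e2, e3]
    congr 2
    rw [← RingHom.mapMatrix_apply, RingHom.map_adjugate, RingHom.mapMatrix_apply, e1]
  have e5 := congrFun (congrFun e4 ()) ()
  rw [Matrix.map_apply] at e5
  rw [e5] at h2
  simp only [Polynomial.coe_evalRingHom, Polynomial.eval_C] at h2
  rw [← h2]
  congr 2
  ext i j; simp

/-- bordered determinant over `Fin (n+1)` -/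
lemma bordered_fin {R : Type*} [CommRing R] {n : ℕ} (K : Matrix (Fin (n+1)) (Fin (n+1)) R) :
    K.det = K (Fin.last n) (Fin.last n) * (K.submatrix Fin.castSucc Fin.castSucc).det -
      ∑ i : Fin n, ∑ j : Fin n, K (Fin.last n) i.castSucc * (K.submatrix Fin.castSucc Fin.castSucc).adjugate i j * K j.castSucc (Fin.last n) := by
  have h := bordered (K.submatrix Fin.castSucc Fin.castSucc) (Matrix.of fun i _ => K i.castSucc (Fin.last n))
    (Matrix.of fun _ i => K (Fin.last n) i.castSucc) (K (Fin.last n) (Fin.last n))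
  set f : Fin n ⊕ Unit → Fin (n+1) := Sum.elim Fin.castSucc (fun _ => Fin.last n) with hf
  have hfb : Function.Bijective f := by
    rw [Fintype.bijective_iff_injective_and_card]
    refine ⟨?_, by simp⟩
    rintro (a | a) (b | b) hab
    · simpa [hf] using hab
    · simp [hf, Fin.ext_iff] at hab; omega
    · simp [hf, Fin.ext_iff] at hab; omega
    · rfl
  rw [← Matrix.det_submatrix_equiv_self (Equiv.ofBijective f hfb)]
  have e : K.submatrix (Equiv.ofBijective f hfb) (Equiv.ofBijective f hfb) = Matrix.fromBlocks (K.submatrix Fin.castSucc Fin.castSucc) (Matrix.of fun i _ => K i.castSucc (Fin.last n))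
    (Matrix.of fun _ i => K (Fin.last n) i.castSucc) (Matrix.of fun _ _ => K (Fin.last n) (Fin.last n)) := by
    ext (i | i) (j | j) <;> simp [hf]
  rw [e, h]
  congr 1
  simp only [Matrix.mul_apply, Matrix.of_apply, Finset.sum_mul]
  rw [Finset.sum_comm]

end

section
open MeasureTheory ProbabilityTheory MvPolynomial


lemma EG_rename_equiv {ι : Type*} [Fintype ι] (e : ι ≃ ι) (P : MvPolynomial ι ℂ) :
    EG ι (rename e P) = EG ι P := by
  induction P using MvPolynomial.induction_on' with
  | add p q hp hq => simp only [map_add, hp, hq]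
  | monomial m a =>
    rw [rename_monomial, EG_monomial, EG_monomial]
    congr 1
    rw [← Equiv.prod_comp e]
    refine Finset.prod_congr rfl fun i _ => ?_
    rw [Finsupp.mapDomain_apply e.injective]

lemma EG_indep {n : ℕ} (P : MvPolynomial (Fin n) ℂ) (Q : MvPolynomial Unit ℂ) :
    EG (Fin (n+1)) (rename Fin.castSucc P * rename (fun _ => Fin.last n) Q) = EG (Fin n) P * EG Unit Q := by
  induction P using MvPolynomial.induction_on' with
  | add p q hp hq => simp only [map_add, add_mul, hp, hq]
  | monomial m a =>
    induction Q using MvPolynomial.induction_on' with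
    | add p q hp hq => simp only [map_add, mul_add, hp, hq]
    | monomial m' a' =>
      rw [rename_monomial, rename_monomial, monomial_mul, EG_monomial, EG_monomial, EG_monomial, Fin.prod_univ_castSucc]
      have h1 : ∀ i : Fin n, (Finsupp.mapDomain Fin.castSucc m + Finsupp.mapDomain (fun _ => Fin.last n) m' : Fin (n+1) →₀ ℕ) i.castSucc = m i := by
        intro i
        rw [Finsupp.add_apply, Finsupp.mapDomain_apply (Fin.castSucc_injective n), Finsupp.mapDomain_notin_range]
        · rfl
        · simp [Fin.ext_iff]; omega
      have h2 : (Finsupp.mapDomain Fin.castSucc m + Finsupp.mapDomain (fun _ => Fin.last n) m' : Fin (n+1) →₀ ℕ) (Fin.last n) = m' () := by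
        rw [Finsupp.add_apply, Finsupp.mapDomain_notin_range, zero_add]
        · exact Finsupp.mapDomain_apply (f := fun _ : Unit => Fin.last n) (fun _ _ _ => rfl) m' ()
        · simp [Fin.ext_iff]
      simp only [h1, h2]
      simp; ring

/-- Hermite polynomial in a variable -/
def hX {ι : Type*} (k : ℕ) (i : ι) : MvPolynomial ι ℂ := Polynomial.aeval (X i) (Polynomial.hermite k)

lemma hX_succ {ι : Type*} [DecidableEq ι] (k : ℕ) (i : ι) : (hX (k+1) i : MvPolynomial ι ℂ) = X i * hX k i - pderiv i (hX k i) := by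
  have : pderiv i (hX k i : MvPolynomial ι ℂ) = Polynomial.aeval (X i) (Polynomial.derivative (Polynomial.hermite k)) := by
    rw [hX]
    have := ((pderiv i : Derivation ℂ (MvPolynomial ι ℂ) _).restrictScalars ℤ).map_aeval (Polynomial.hermite k) (X i)
    rw [Derivation.restrictScalars_apply, Derivation.restrictScalars_apply, pderiv_X_self, smul_eq_mul, mul_one] at this
    exact this
  rw [this, hX, hX, Polynomial.hermite_succ]
  simp

lemma rename_hX {ι κ : Type*} (f : ι → κ) (k : ℕ) (i : ι) : rename f (hX k i) = hX k (f i) := by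
  rw [hX, hX, ← AlgHom.coe_restrictScalars' ℤ, ← Polynomial.aeval_algHom_apply]; simp

lemma pderiv_hX {ι : Type*} [DecidableEq ι] (k : ℕ) (i : ι) : pderiv i (hX (k+1) i : MvPolynomial ι ℂ) = ((k:MvPolynomial ι ℂ)+1) * hX k i := by
  induction k with
  | zero => simp [hX]
  | succ k ih =>
    rw [hX_succ, map_sub, Derivation.leibniz, ih, Derivation.leibniz, pderiv_X_self]
    have := hX_succ (ι := ι) k i
    have h2 : pderiv i ((k:MvPolynomial ι ℂ) + 1) = 0 := by
      have := (pderiv i).map_natCast (k+1) (A := MvPolynomial ι ℂ) (R := ℂ)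
      simpa using this
    simp only [smul_eq_mul, h2, mul_zero, add_zero, mul_one]
    push_cast
    rw [show X i * (((k:MvPolynomial ι ℂ) + 1) * hX k i) + hX (k + 1) i - (↑k + 1) * pderiv i (hX k i) = hX (k + 1) i + ((k:MvPolynomial ι ℂ)+1) * (X i * hX k i - pderiv i (hX k i)) by ring, ← this]
    ring

lemma EG_hX_succ {ι : Type*} [Fintype ι] [DecidableEq ι] (k : ℕ) (i : ι) (P : MvPolynomial ι ℂ) :
    EG ι (hX (k+1) i * P) = EG ι (hX k i * pderiv i P) := by
  rw [hX_succ, sub_mul, map_sub, mul_assoc, EG_stein, Derivation.leibniz, ← map_sub]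
  congr 1
  simp only [smul_eq_mul]; ring

lemma EG_hX_hX {ι : Type*} [Fintype ι] [DecidableEq ι] (j k : ℕ) (i : ι) :
    EG ι (hX j i * hX k i) = if j = k then (k.factorial : ℂ) else 0 := by
  have h0 : ∀ k, EG ι (hX (k+1) i * hX 0 i) = 0 := by
    intro k
    rw [EG_hX_succ]; simp [hX]
  induction j generalizing k with
  | zero =>
    cases k with
    | zero => simp [hX, EG_one]
    | succ k => rw [mul_comm, h0]; simp
  | succ j ih =>
    cases k with
    | zero => rw [h0]; simp
    | succ k =>
      rw [EG_hX_succ, pderiv_hX, show hX j i * (((k:MvPolynomial ι ℂ)+1) * hX k i) = ((k:ℂ)+1) • (hX j i * hX k i) by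
        rw [smul_eq_C_mul]; simp; ring, map_smul, ih]
      by_cases h : j = k <;> simp [h, Nat.factorial_succ]

/-- polynomial part of the kernel -/
def kk (N : ℕ) {ι : Type*} (i j : ι) : MvPolynomial ι ℂ :=
  ∑ k ∈ Finset.range N, C ((k.factorial : ℂ)⁻¹) * (hX k i * hX k j)

def kM (N n : ℕ) : Matrix (Fin n) (Fin n) (MvPolynomial (Fin n) ℂ) := Matrix.of fun i j => kk N i j

lemma rename_kk (N : ℕ) {ι κ : Type*} (f : ι → κ) (i j : ι) : rename f (kk N i j) = kk N (f i) (f j) := by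
  simp only [kk, map_sum, map_mul, rename_hX, rename_C]

lemma kk_comm (N : ℕ) {ι : Type*} (i j : ι) : kk N i j = kk N j i := by
  simp only [kk, mul_comm (hX _ i)]

lemma kM_sub (N n : ℕ) : (kM N (n+1)).submatrix Fin.castSucc Fin.castSucc = (rename Fin.castSucc : _ →ₐ[ℂ] _).toRingHom.mapMatrix (kM N n) := by
  ext1 i j
  simp [kM, rename_kk]

lemma EG_kk_last (N n : ℕ) (P : MvPolynomial (Fin n) ℂ) :
    EG (Fin (n+1)) (rename Fin.castSucc P * kk N (Fin.last n) (Fin.last n)) = N * EG (Fin n) P := by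
  have : kk N (Fin.last n) (Fin.last n) = rename (fun _ : Unit => Fin.last n) (kk N () ()) := by rw [rename_kk]
  rw [this, EG_indep, mul_comm]
  congr 1
  simp only [kk, map_sum, ← smul_eq_C_mul, map_smul, EG_hX_hX]
  rw [Finset.sum_congr rfl (g := fun _ => (1:ℂ))]
  · simp
  · intro k _
    have : (k.factorial : ℂ) ≠ 0 := by exact_mod_cast k.factorial_ne_zero
    simp [this]

lemma EG_kk_kk (N n : ℕ) (i j : Fin n) (P : MvPolynomial (Fin n) ℂ) :
    EG (Fin (n+1)) (rename Fin.castSucc P * (kk N (Fin.last n) i.castSucc * kk N j.castSucc (Fin.last n))) = EG (Fin n) (P * kk N i j) := by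
  have h1 : rename Fin.castSucc P * (kk N (Fin.last n) i.castSucc * kk N j.castSucc (Fin.last n)) =
     ∑ k ∈ Finset.range N, ∑ l ∈ Finset.range N, ((k.factorial : ℂ)⁻¹ * (l.factorial : ℂ)⁻¹) •
       (rename Fin.castSucc (P * (hX k i * hX l j)) * rename (fun _ : Unit => Fin.last n) (hX k () * hX l ())) := by
    rw [kk, kk, Finset.sum_mul_sum, Finset.mul_sum]
    refine Finset.sum_congr rfl fun k _ => ?_
    rw [Finset.mul_sum]
    refine Finset.sum_congr rfl fun l _ => ?_
    simp only [map_mul, rename_hX, smul_eq_C_mul]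
    ring
  rw [h1]
  simp only [map_sum, map_smul, EG_indep, EG_hX_hX]
  rw [kk, Finset.mul_sum, map_sum]
  refine Finset.sum_congr rfl fun k hk => ?_
  rw [Finset.sum_eq_single k]
  · have : (k.factorial : ℂ) ≠ 0 := by exact_mod_cast k.factorial_ne_zero
    rw [mul_left_comm P (C _), ← smul_eq_C_mul, map_smul]
    simp only [if_true, smul_eq_mul]
    field_simp
  · intro l _ hl
    simp [hl.symm]
  · intro h; exact absurd hk h

lemma gaudin (N n : ℕ) (P : MvPolynomial (Fin n) ℂ) :
    EG (Fin (n+1)) (rename Fin.castSucc P * (kM N (n+1)).det) = ((N:ℂ) - n) * EG (Fin n) (P * (kM N n).det) := by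
  rw [bordered_fin, kM_sub, ← RingHom.map_det, ← RingHom.map_adjugate, mul_sub, map_sub, sub_mul]
  congr 1
  · rw [mul_comm (kM N (n+1) _ _), ← mul_assoc]
    change EG (Fin (n+1)) (rename Fin.castSucc P * rename Fin.castSucc (kM N n).det * kk N (Fin.last n) (Fin.last n)) = _
    rw [← map_mul, EG_kk_last]
  · have h1 : ∀ i j : Fin n, EG (Fin (n+1)) (rename Fin.castSucc P * (kM N (n+1) (Fin.last n) i.castSucc * ((rename Fin.castSucc : _ →ₐ[ℂ] _).toRingHom.mapMatrix (kM N n).adjugate) i j * kM N (n+1) j.castSucc (Fin.last n)))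
        = EG (Fin n) (P * (kM N n j i * (kM N n).adjugate i j)) := by
      intro i j
      have := EG_kk_kk N n i j (P * (kM N n).adjugate i j)
      rw [map_mul (rename _)] at this
      rw [show P * (kM N n j i * (kM N n).adjugate i j) = P * (kM N n).adjugate i j * kk N i j by
        rw [kk_comm]; simp only [kM, Matrix.of_apply]; ring, ← this]
      congr 1
      simp [kM]; ring
    simp only [Finset.mul_sum, map_sum, h1]
    rw [Finset.sum_comm]
    simp only [← map_sum, ← Finset.mul_sum]
    have h2 : ∀ j, ∑ i, kM N n j i * (kM N n).adjugate i j = (kM N n).det := by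
      intro j
      have := congrFun (congrFun (Matrix.mul_adjugate (kM N n)) j) j
      rw [Matrix.mul_apply] at this
      simpa using this
    simp only [h2]
    simp [← smul_eq_C_mul, ← nsmul_eq_mul, map_nsmul]

lemma gaudin_iter (N n : ℕ) (hn : n ≤ N) (P : MvPolynomial (Fin n) ℂ) :
    EG (Fin N) (rename (Fin.castLE hn) P * (kM N N).det) = ((N - n).factorial : ℂ) * EG (Fin n) (P * (kM N n).det) := by
  induction hn using Nat.decreasingInduction with
  | self => 
    have : (Fin.castLE (le_refl N)) = id := by ext; simp
    rw [this]; simp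
  | of_succ k hk ih =>
    have := ih (rename Fin.castSucc P)
    rw [rename_rename, gaudin] at this
    have e : (Fin.castLE (show k + 1 ≤ N from hk) ∘ Fin.castSucc) = Fin.castLE (Nat.le_of_lt hk) := by ext; simp
    rw [e] at this
    rw [this, ← mul_assoc]
    congr 1
    have h2 : N - k = (N - (k+1)) + 1 := by omega
    rw [h2, Nat.factorial_succ, ← h2]
    push_cast [Nat.le_of_lt hk]
    ring

end

section
open MeasureTheory ProbabilityTheory MvPolynomial


lemma det_kM_VV (N : ℕ) : (kM N N).det = C (∏ k : Fin N, ((k : ℕ).factorial : ℂ)⁻¹) * VV N ^ 2 := by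
  set A : Matrix (Fin N) (Fin N) (MvPolynomial (Fin N) ℂ) := Matrix.of fun i k => hX (k : ℕ) i with hA
  have h1 : kM N N = A * Matrix.diagonal (fun k : Fin N => C (((k : ℕ).factorial : ℂ)⁻¹)) * A.transpose := by
    ext1 i j
    rw [Matrix.mul_apply]
    simp only [Matrix.mul_diagonal, Matrix.transpose_apply, hA, Matrix.of_apply, kM, kk]
    rw [Finset.sum_range]
    refine Finset.sum_congr rfl fun k _ => by ring
  have h2 : A.det = VV N := by
    have := Matrix.det_eval_matrixOfPolynomials_eq_det_vandermonde (R := MvPolynomial (Fin N) ℂ) (fun i => X i)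
      (fun k => (Polynomial.hermite (k:ℕ)).map (Int.castRingHom _))
      (fun k => by
        rw [Polynomial.Monic.natDegree_map (Polynomial.hermite_monic _), Polynomial.natDegree_hermite])
      (fun k => (Polynomial.hermite_monic _).map _)
    rw [Matrix.det_vandermonde] at this
    rw [VV, this]
    congr 1
    ext1 i k
    simp only [hA, hX, Polynomial.aeval_def, Polynomial.eval_map, Matrix.of_apply]
    congr 1
  rw [h1, Matrix.det_mul, Matrix.det_mul, Matrix.det_transpose, Matrix.det_diagonal, h2, map_prod]
  ring

lemma exists_psum {N : ℕ} (S : MvPolynomial (Fin N) ℂ) (hS : S.IsSymmetric) :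
    ∃ F : MvPolynomial ℕ ℂ, S = aeval (TV N) F := by
  have hTV : ∀ k, TV N k ∈ (aeval (R := ℂ) (TV N)).range := fun k => ⟨X k, by simp⟩
  have hp : ∀ k, psum (Fin N) ℂ k = TV N k := fun k => rfl
  have he : ∀ k, esymm (Fin N) ℂ k ∈ (aeval (R := ℂ) (TV N)).range := by
    intro k
    induction k using Nat.strong_induction_on with
    | _ k ih =>
      rcases Nat.eq_zero_or_pos k with rfl | hk
      · rw [esymm_zero]; exact one_mem _
      · have h := mul_esymm_eq_sum (Fin N) ℂ k
        have hk' : (k:ℂ) ≠ 0 := by exact_mod_cast hk.ne'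
        have : esymm (Fin N) ℂ k = (k:ℂ)⁻¹ • ((k : MvPolynomial (Fin N) ℂ) * esymm (Fin N) ℂ k) := by
          rw [show ((k : MvPolynomial (Fin N) ℂ)) = C (k:ℂ) by simp, ← smul_eq_C_mul, smul_smul, inv_mul_cancel₀ hk', one_smul]
        rw [this, h]
        refine Subalgebra.smul_mem _ (mul_mem (pow_mem (neg_mem (one_mem _)) _) (sum_mem fun a ha => ?_)) _
        refine mul_mem (mul_mem (pow_mem (neg_mem (one_mem _)) _) (ih _ ?_)) (hp _ ▸ hTV _)
        simpa using (Finset.mem_filter.1 ha).2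
  obtain ⟨G, hG⟩ := esymmAlgHom_surjective (σ := Fin N) (R := ℂ) (n := N) (by simp) ⟨S, hS⟩
  have h2 := congrArg Subtype.val hG
  rw [esymmAlgHom_apply] at h2
  have : S ∈ (aeval (R := ℂ) (TV N)).range := by
    change _ = S at h2
    rw [← h2]
    have := Subalgebra.mvPolynomial_aeval_coe (R := ℂ) (A := MvPolynomial (Fin N) ℂ) (σ := Fin N) (aeval (R := ℂ) (TV N)).range (fun i => ⟨_, he (i+1)⟩) G
    simp only at this
    rw [this]
    exact Subtype.property _
  obtain ⟨F, hF⟩ := this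
  exact ⟨F, hF.symm⟩

lemma EV_VVsymm {N : ℕ} (e : Fin N ≃ Fin N) (f) : EV N (rename e f) = EV N f := by
  have h : rename e (VV N ^ 2) = VV N ^ 2 := by
    have h0 : VV N ^ 2 = C (∏ k : Fin N, ((k : ℕ).factorial : ℂ)) * (kM N N).det := by
      rw [det_kM_VV, ← mul_assoc, ← C_mul, ← Finset.prod_mul_distrib]
      rw [Finset.prod_eq_one, C_1, one_mul]
      intro k _
      exact mul_inv_cancel₀ (by exact_mod_cast (k:ℕ).factorial_ne_zero)
    rw [h0, map_mul, rename_C]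
    congr 1
    change (rename e).toRingHom _ = _
    rw [RingHom.map_det, ← Matrix.det_submatrix_equiv_self e (kM N N)]
    congr 1
    ext1 i j
    simp [kM, rename_kk]
  rw [EV_apply, EV_apply, ← EG_rename_equiv e (VV N ^ 2 * f), map_mul (rename e), h]

lemma sum_emb_symm {n N : ℕ} (P : MvPolynomial (Fin n) ℂ) :
    (∑ σ : Fin n ↪ Fin N, rename σ P).IsSymmetric := by
  intro e
  rw [map_sum]
  have : ∀ σ : Fin n ↪ Fin N, rename e (rename σ P) = rename (σ.trans e.toEmbedding) P := by
    intro σ; rw [rename_rename]; rfl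
  simp only [this]
  refine Fintype.sum_equiv ((Equiv.refl (Fin n)).embeddingCongr e) _ _ fun σ => ?_
  rfl

lemma EV_emb {n N : ℕ} (hn : n ≤ N) (P : MvPolynomial (Fin n) ℂ) (σ : Fin n ↪ Fin N) :
    EV N (rename σ P) = EV N (rename (Fin.castLE hn) P) := by
  obtain ⟨g, hg⟩ := (Equiv.Perm.isMultiplyPretransitive (Fin N) n).exists_smul_eq (Fin.castLEEmb hn) σ
  rw [← EV_VVsymm g (rename (Fin.castLE hn) P), rename_rename, ← hg]
  rfl

lemma EV_castLE {n N : ℕ} (hn : n ≤ N) (P : MvPolynomial (Fin n) ℂ) :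
    (∏ k : Fin N, ((k : ℕ).factorial : ℂ)⁻¹) * EV N (rename (Fin.castLE hn) P) =
      ((N - n).factorial : ℂ) * EG (Fin n) (P * (kM N n).det) := by
  rw [← gaudin_iter, det_kM_VV, mul_left_comm, ← smul_eq_C_mul, map_smul, EV_apply, smul_eq_mul, mul_comm (VV N ^ 2)]

lemma npoint_alg {n N : ℕ} (hn : n ≤ N) (P : MvPolynomial (Fin n) ℂ) :
    EV N (∑ σ : Fin n ↪ Fin N, rename σ P) = EV N 1 * EG (Fin n) (P * (kM N n).det) := by
  have hZ : (∏ k : Fin N, ((k : ℕ).factorial : ℂ)⁻¹) ≠ 0 := by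
    rw [Finset.prod_ne_zero_iff]; intro k _
    exact inv_ne_zero (by exact_mod_cast (k:ℕ).factorial_ne_zero)
  apply mul_left_cancel₀ hZ
  have h1 := EV_castLE (Nat.zero_le N) (1 : MvPolynomial (Fin 0) ℂ)
  simp [EG_one] at h1
  rw [map_sum, Finset.sum_congr rfl (fun σ _ => EV_emb hn P σ), Finset.sum_const, nsmul_eq_mul, mul_left_comm, EV_castLE,
    ← mul_assoc, ← mul_assoc]
  congr 1
  rw [Finset.prod_inv_distrib, h1]
  simp only [Finset.card_univ, Fintype.card_embedding_eq, Fintype.card_fin]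
  norm_cast
  rw [mul_comm, Nat.factorial_mul_descFactorial hn]

lemma EV_one_ne {N : ℕ} : EV N 1 ≠ 0 := by
  have h1 := EV_castLE (Nat.zero_le N) (1 : MvPolynomial (Fin 0) ℂ)
  simp [EG_one] at h1
  intro h
  rw [h, mul_zero] at h1
  exact N.factorial_ne_zero (by exact_mod_cast h1.symm)

lemma cev_rename {ι κ : Type*} (f : ι → κ) (x : κ → ℝ) (P : MvPolynomial ι ℂ) : cev x (rename f P) = cev (fun i => x (f i)) P := by
  simp only [cev, aeval_rename]; rfl

/-- moments of the GUE correlation measure -/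
lemma npoint_moment {n N : ℕ} (hn : n ≤ N) (P : MvPolynomial (Fin n) ℂ) :
    ∫ x, ∑ σ : Fin n ↪ Fin N, cev (fun i => eig (herm x) (σ i)) P ∂(gs (Fin N × Fin N)) =
      EG (Fin n) (P * (kM N n).det) := by
  obtain ⟨F, hF⟩ := exists_psum _ (sum_emb_symm (N := N) P)
  have h1 := moment_key N F
  rw [← hF, npoint_alg hn] at h1
  rw [mul_left_cancel₀ EV_one_ne h1]
  change _ = ∫ x, cev x (aeval (TM N) F) ∂(gs (Fin N × Fin N))
  congr 1
  ext x
  have h2 : cev x (aeval (TM N) F) = cev (fun i => eig (herm x) i) (aeval (TV N) F) := by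
    have h3 : (cev x).comp (aeval (TM N)) = (cev (fun i => eig (herm x) i)).comp (aeval (TV N)) := by
      apply MvPolynomial.algHom_ext
      intro k
      simp only [AlgHom.comp_apply, aeval_X, cev_TM, TV, map_sum, map_pow]
      simp [cev]
    exact congrArg (fun f => f F) h3
  rw [h2, ← hF, map_sum]
  simp only [cev_rename]

end

section
open MeasureTheory ProbabilityTheory


lemma charExp_hasSum {n : ℕ} (μ : Measure (Fin n → ℝ)) [IsFiniteMeasure μ]
    (h : ∀ c : ℝ, 0 ≤ c → Integrable (fun x : Fin n → ℝ => Real.exp (c * ∑ i, |x i|)) μ) (t : Fin n → ℝ) :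
    HasSum (fun m : ℕ => ∫ x, cev x (MvPolynomial.C (((m.factorial : ℂ))⁻¹) * (∑ i, MvPolynomial.C (Complex.I * t i) * MvPolynomial.X i) ^ m) ∂μ)
      (∫ x, Complex.exp (∑ i, (x i * t i : ℝ) * Complex.I) ∂μ) := by
  have hs : ∀ x : Fin n → ℝ, cev x (∑ i, MvPolynomial.C (Complex.I * t i) * MvPolynomial.X i) = (∑ i, (x i * t i : ℝ)) * Complex.I := by
    intro x
    simp only [map_sum, map_mul, cev, MvPolynomial.aeval_C, MvPolynomial.aeval_X, Finset.sum_mul]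
    push_cast
    rw [Finset.sum_mul]
    refine Finset.sum_congr rfl fun i _ => ?_
    simp; ring
  set C0 := ∑ i, |t i| with hC0
  have hbd : ∀ x : Fin n → ℝ, |∑ i, x i * t i| ≤ C0 * ∑ i, |x i| := by
    intro x
    refine (Finset.abs_sum_le_sum_abs _ _).trans ?_
    rw [Finset.mul_sum]
    refine Finset.sum_le_sum fun i _ => ?_
    rw [abs_mul, mul_comm]
    gcongr
    exact Finset.single_le_sum (f := fun i => |t i|) (fun i _ => abs_nonneg _) (Finset.mem_univ i)
  refine hasSum_integral_of_dominated_convergence (fun m x => |∑ i, x i * t i| ^ m / m.factorial) ?_ ?_ ?_ ?_ ?_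
  · intro m
    exact (cev_cont _).aestronglyMeasurable
  · intro m
    refine Filter.Eventually.of_forall fun x => ?_
    rw [map_mul, map_pow, hs, norm_mul, norm_pow, norm_mul, Complex.norm_I, mul_one, Complex.norm_real, Real.norm_eq_abs]
    simp [cev]
    rw [mul_comm, div_eq_mul_inv]
  · exact Filter.Eventually.of_forall fun x => Real.summable_pow_div_factorial _
  · have : ∀ x : Fin n → ℝ, ∑' m : ℕ, |∑ i, x i * t i| ^ m / m.factorial = Real.exp |∑ i, x i * t i| := by
      intro x
      rw [Real.exp_eq_exp_ℝ, NormedSpace.exp_eq_tsum_div]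
    simp only [this]
    refine (h C0 (Finset.sum_nonneg fun i _ => abs_nonneg _)).mono' (Continuous.aestronglyMeasurable (by fun_prop)) (Filter.Eventually.of_forall fun x => ?_)
    rw [Real.norm_eq_abs, Real.abs_exp]
    exact Real.exp_le_exp.2 (hbd x)
  · refine Filter.Eventually.of_forall fun x => ?_
    have : HasSum (fun m : ℕ => ((∑ i, (x i * t i : ℝ)) * Complex.I) ^ m / (m.factorial : ℂ)) (Complex.exp ((∑ i, (x i * t i : ℝ)) * Complex.I)) := by
      rw [Complex.exp_eq_exp_ℂ]
      exact NormedSpace.expSeries_div_hasSum_exp _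
    rw [← Finset.sum_mul, ← Complex.ofReal_sum]
    have e : ∀ m : ℕ, cev x (MvPolynomial.C (((m.factorial : ℂ))⁻¹) * (∑ i, MvPolynomial.C (Complex.I * t i) * MvPolynomial.X i) ^ m) = ((∑ i, (x i * t i : ℝ)) * Complex.I) ^ m / (m.factorial : ℂ) := by
      intro m
      rw [map_mul, map_pow, hs, mul_comm, div_eq_mul_inv]
      simp [cev]
    simp only [e]
    exact_mod_cast this

lemma moment_det {n : ℕ} (μ ν : Measure (Fin n → ℝ)) [IsFiniteMeasure μ] [IsFiniteMeasure ν]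
    (hμ : ∀ c : ℝ, 0 ≤ c → Integrable (fun x : Fin n → ℝ => Real.exp (c * ∑ i, |x i|)) μ)
    (hν : ∀ c : ℝ, 0 ≤ c → Integrable (fun x : Fin n → ℝ => Real.exp (c * ∑ i, |x i|)) ν)
    (h : ∀ P : MvPolynomial (Fin n) ℂ, ∫ x, cev x P ∂μ = ∫ x, cev x P ∂ν) : μ = ν := by
  have hE : ∀ t : Fin n → ℝ, ∫ x, Complex.exp (∑ i, (x i * t i : ℝ) * Complex.I) ∂μ = ∫ x, Complex.exp (∑ i, (x i * t i : ℝ) * Complex.I) ∂ν := by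
    intro t
    refine (charExp_hasSum μ hμ t).unique ?_
    simp only [h]
    exact charExp_hasSum ν hν t
  have hm : Measurable (WithLp.toLp 2 : (Fin n → ℝ) → EuclideanSpace ℝ (Fin n)) := WithLp.measurable_toLp 2 _
  have key : μ.map (WithLp.toLp 2 : (Fin n → ℝ) → EuclideanSpace ℝ (Fin n)) = ν.map (WithLp.toLp 2) := by
    apply Measure.ext_of_charFun
    ext t
    rw [charFun_apply, charFun_apply, integral_map hm.aemeasurable (by fun_prop), integral_map hm.aemeasurable (by fun_prop)]
    have e : ∀ x : Fin n → ℝ, Complex.exp ((inner ℝ (WithLp.toLp 2 x) t : ℝ) * Complex.I) = Complex.exp (∑ i, (x i * t i : ℝ) * Complex.I) := by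
      intro x
      rw [← Finset.sum_mul, ← Complex.ofReal_sum]
      congr 3
      rw [PiLp.inner_apply]
      simp [mul_comm]
    simp only [e]
    exact hE t.ofLp
  have := congrArg (Measure.map (WithLp.ofLp : EuclideanSpace ℝ (Fin n) → (Fin n → ℝ))) key
  have hm' : Measurable (WithLp.ofLp : EuclideanSpace ℝ (Fin n) → (Fin n → ℝ)) := by fun_prop
  rw [Measure.map_map hm' hm, Measure.map_map hm' hm] at this
  simpa [Function.comp_def] using this

end

section
open MeasureTheory ProbabilityTheory


lemma sum_sq_le_sq {ι : Type*} [Fintype ι] (x : ι → ℝ) : ∑ i, x i ^ 2 ≤ (∑ i, |x i|) ^ 2 := by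
  rw [pow_two (∑ i, |x i|), Finset.sum_mul]
  refine Finset.sum_le_sum fun i _ => ?_
  rw [← sq_abs, pow_two]
  gcongr
  exact Finset.single_le_sum (f := fun i => |x i|) (fun i _ => abs_nonneg _) (Finset.mem_univ i)

lemma abs_eig_le {N : ℕ} (x : Fin N × Fin N → ℝ) (i : Fin N) : |eig (herm x) i| ≤ ∑ p, |x p| := by
  have h := eig_sq_le (herm x) i
  have h2 : trSq (herm x) = ∑ p, x p ^ 2 := by
    have := herm_trSq (N := N) (WithLp.toLp 2 x)
    rw [EuclideanSpace.norm_sq_eq] at this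
    rw [show herm x = hermL N (WithLp.toLp 2 x) from rfl, this]
    simp
  rw [h2] at h
  exact abs_le_of_sq_le_sq (h.trans (sum_sq_le_sq x)) (Finset.sum_nonneg fun _ _ => abs_nonneg _)

lemma psum_eq_cev {n N : ℕ} (y z : Fin N → ℝ) (h : ∀ k : ℕ, ∑ i, (y i : ℂ) ^ k = ∑ i, (z i : ℂ) ^ k) (P : MvPolynomial (Fin n) ℂ) :
    ∑ σ : Fin n ↪ Fin N, cev (fun i => y (σ i)) P = ∑ σ : Fin n ↪ Fin N, cev (fun i => z (σ i)) P := by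
  obtain ⟨F, hF⟩ := exists_psum _ (sum_emb_symm (N := N) P)
  have h1 : ∀ w : Fin N → ℝ, ∑ σ : Fin n ↪ Fin N, cev (fun i => w (σ i)) P = MvPolynomial.aeval (fun k => ∑ i, (w i : ℂ) ^ k) F := by
    intro w
    have : ∑ σ : Fin n ↪ Fin N, cev (fun i => w (σ i)) P = cev w (∑ σ : Fin n ↪ Fin N, MvPolynomial.rename σ P) := by
      rw [map_sum]; simp only [cev_rename]
    rw [this, hF]
    have h3 : (cev w).comp (MvPolynomial.aeval (TV N)) = MvPolynomial.aeval (fun k => ∑ i, (w i : ℂ) ^ k) := by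
      apply MvPolynomial.algHom_ext
      intro k
      simp only [AlgHom.comp_apply, MvPolynomial.aeval_X, TV, map_sum, map_pow]
      simp [cev]
    exact congrArg (fun f => f F) h3
  rw [h1, h1]; simp only [h]

lemma psum_smul {N : ℕ} (c : ℝ) (x : Fin N × Fin N → ℝ) (k : ℕ) :
    ∑ i, (eig (herm (c • x)) i : ℂ) ^ k = ∑ i, ((c * eig (herm x) i : ℝ) : ℂ) ^ k := by
  have e : (herm (c • x) : Matrix (Fin N) (Fin N) ℂ) = (c : ℂ) • (herm x : Matrix (Fin N) (Fin N) ℂ) := by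
    ext i j; simp [herm_apply]; ring
  rw [← trace_pow_eig, e, smul_pow, Matrix.trace_smul, trace_pow_eig]
  simp [mul_pow, Finset.mul_sum]

/-- The real polynomial kernel density. -/
def dK (N n : ℕ) (x : Fin n → ℝ) : ℝ := (cev x (kM N n).det).re

def hR (k : ℕ) (x : ℝ) : ℝ := Polynomial.aeval x (Polynomial.hermite k)

lemma cev_hX {ι : Type*} (k : ℕ) (i : ι) (x : ι → ℝ) : cev x (hX k i) = (hR k (x i) : ℂ) := by
  rw [hX, hR, ← AlgHom.coe_restrictScalars' ℤ, ← Polynomial.aeval_algHom_apply]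
  have : ((x i : ℝ) : ℂ) = ((Complex.ofRealAm).restrictScalars ℤ) (x i) := rfl
  have h2 : ((cev x).restrictScalars ℤ) (MvPolynomial.X i) = ((Complex.ofRealAm).restrictScalars ℤ) (x i) := by
    simp [cev]
  rw [h2, Polynomial.aeval_algHom_apply]
  rfl

lemma cev_det (N n : ℕ) (x : Fin n → ℝ) : cev x (kM N n).det =
    ((Matrix.det (Matrix.of fun i j : Fin n => ∑ k ∈ Finset.range N, (k.factorial : ℝ)⁻¹ * (hR k (x i) * hR k (x j))) : ℝ) : ℂ) := by
  rw [← Complex.ofRealHom_eq_coe, RingHom.map_det]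
  change (cev x).toRingHom _ = _
  rw [RingHom.map_det]
  congr 1
  ext1 i j
  simp only [RingHom.mapMatrix_apply, Matrix.map_apply, kM, Matrix.of_apply, kk]
  simp only [map_sum, map_mul]
  refine Finset.sum_congr rfl fun k _ => ?_
  have h1 : ∀ i, (cev x).toRingHom (hX k i) = Complex.ofRealHom (hR k (x i)) := fun i => cev_hX k i x
  rw [h1, h1]
  simp [cev]

lemma dK_eq (N n : ℕ) (x : Fin n → ℝ) : dK N n x = Matrix.det (Matrix.of fun i j : Fin n => ∑ k ∈ Finset.range N, (k.factorial : ℝ)⁻¹ * (hR k (x i) * hR k (x j))) := by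
  rw [dK, cev_det, Complex.ofReal_re]

lemma cev_dK (N n : ℕ) (x : Fin n → ℝ) : cev x (kM N n).det = (dK N n x : ℂ) := by
  rw [dK_eq, cev_det]

lemma dK_nonneg (N n : ℕ) (x : Fin n → ℝ) : 0 ≤ dK N n x := by
  rw [dK_eq]
  set B : Matrix (Fin N) (Fin n) ℝ := Matrix.of fun k i => (Real.sqrt ((k : ℕ).factorial : ℝ))⁻¹ * hR k (x i) with hB
  have : (Matrix.of fun i j : Fin n => ∑ k ∈ Finset.range N, (k.factorial : ℝ)⁻¹ * (hR k (x i) * hR k (x j))) = B.conjTranspose * B := by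
    ext i j
    rw [Matrix.mul_apply, Matrix.of_apply, Finset.sum_range]
    refine Finset.sum_congr rfl fun k _ => ?_
    simp only [hB, Matrix.conjTranspose_apply, Matrix.of_apply, star_trivial]
    have : (((k : ℕ).factorial : ℝ))⁻¹ = (Real.sqrt ((k : ℕ).factorial : ℝ))⁻¹ * (Real.sqrt ((k : ℕ).factorial : ℝ))⁻¹ := by
      rw [← mul_inv, Real.mul_self_sqrt (by positivity)]
    rw [this]; ring
  rw [this]
  exact (Matrix.posSemidef_conjTranspose_mul_self B).det_nonneg

lemma dK_cont (N n : ℕ) : Continuous (dK N n) := Complex.continuous_re.comp (cev_cont _)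

/-- correlation measure of the scaled Gaussian ensemble -/
def M1 (n N : ℕ) (c : ℝ) : Measure (Fin n → ℝ) :=
  ∑ σ : Fin n ↪ Fin N, (gs (Fin N × Fin N)).map (fun x i => eig (herm (c • x)) (σ i))

def M2 (n N : ℕ) (c : ℝ) : Measure (Fin n → ℝ) :=
  ((gs (Fin n)).withDensity (fun x => ENNReal.ofReal (dK N n x))).map (fun x => c • x)

lemma meas_eigσ {n N : ℕ} (c : ℝ) (σ : Fin n ↪ Fin N) : Measurable (fun (x : Fin N × Fin N → ℝ) (i : Fin n) => eig (herm (c • x)) (σ i)) := by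
  refine measurable_pi_lambda _ fun i => ?_
  exact (meas_eig (σ i)).comp (meas_herm.comp (measurable_const_smul c))

instance M1_fin (n N : ℕ) (c : ℝ) : IsFiniteMeasure (M1 n N c) := by
  unfold M1; infer_instance

lemma dK_int (N n : ℕ) : Integrable (dK N n) (gs (Fin n)) := (gs_int (kM N n).det).re

instance M2_fin (n N : ℕ) (c : ℝ) : IsFiniteMeasure (M2 n N c) := by
  unfold M2
  have := isFiniteMeasure_withDensity_ofReal (dK_int N n).2
  infer_instance

lemma exp_eig_int {n N : ℕ} (c d : ℝ) (hd : 0 ≤ d) (σ : Fin n ↪ Fin N) :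
    Integrable (fun x => Real.exp (d * ∑ i, |eig (herm (c • x)) (σ i)|)) (gs (Fin N × Fin N)) := by
  have h := (gs_int_exp (ι := Fin N × Fin N) 1 (d * n * |c|)).re
  refine h.mono' ?_ (Filter.Eventually.of_forall fun x => ?_)
  · have := meas_eigσ c σ
    have h2 : Continuous (fun y : Fin n → ℝ => Real.exp (d * ∑ i, |y i|)) := by fun_prop
    exact (h2.measurable.comp this).aestronglyMeasurable
  · rw [Real.norm_eq_abs, Real.abs_exp]
    simp only [map_one, one_mul]
    change _ ≤ Real.exp _
    rw [Real.exp_le_exp, mul_assoc, mul_assoc]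
    gcongr
    refine (Finset.sum_le_card_nsmul _ _ (|c| * ∑ p, |x p|) fun i _ => ?_).trans (by simp)
    refine (abs_eig_le _ _).trans ?_
    simp [abs_mul, Finset.mul_sum]

lemma M1_exp {n N : ℕ} (c d : ℝ) (hd : 0 ≤ d) : Integrable (fun x : Fin n → ℝ => Real.exp (d * ∑ i, |x i|)) (M1 n N c) := by
  rw [M1, integrable_finset_sum_measure]
  intro σ _
  rw [integrable_map_measure (Continuous.aestronglyMeasurable (by fun_prop)) (meas_eigσ c σ).aemeasurable]
  exact exp_eig_int c d hd σ

lemma M2_integrable {n N : ℕ} (c : ℝ) (f : (Fin n → ℝ) → ℂ) (hf : Continuous f) :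
    (Integrable f (M2 n N c) ↔ Integrable (fun x => (dK N n x : ℂ) * f (c • x)) (gs (Fin n))) ∧ 
    ∫ x, f x ∂(M2 n N c) = ∫ x, (dK N n x : ℂ) * f (c • x) ∂(gs (Fin n)) := by
  have hm : Measurable (fun x : Fin n → ℝ => c • x) := measurable_const_smul c
  have hd : Measurable (fun x => ENNReal.ofReal (dK N n x)) := (dK_cont N n).measurable.ennreal_ofReal
  constructor
  · rw [M2, integrable_map_measure hf.aestronglyMeasurable hm.aemeasurable, integrable_withDensity_iff_integrable_smul' hd (by simp)]
    simp [ENNReal.toReal_ofReal (dK_nonneg _ _ _), Function.comp_def]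
  · rw [M2, integral_map hm.aemeasurable hf.aestronglyMeasurable, integral_withDensity_eq_integral_toReal_smul hd (by simp)]
    simp [ENNReal.toReal_ofReal (dK_nonneg _ _ _)]

lemma M2_exp {n N : ℕ} (c d : ℝ) : Integrable (fun x : Fin n → ℝ => Real.exp (d * ∑ i, |x i|)) (M2 n N c) := by
  have h := ((M2_integrable (N := N) c (fun x : Fin n → ℝ => ((Real.exp (d * ∑ i, |x i|) : ℝ) : ℂ)) (by fun_prop)).1.2 (by
    have := gs_int_exp (kM N n).det (d * |c|)
    refine this.congr (Filter.Eventually.of_forall fun x => ?_)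
    simp only [cev_dK]
    congr 3
    simp [abs_mul, ← Finset.mul_sum, mul_assoc])).re
  exact h

lemma cev_bound {n : ℕ} (P : MvPolynomial (Fin n) ℂ) : ∃ C k : ℝ, 0 ≤ C ∧ 0 ≤ k ∧ ∀ y : Fin n → ℝ, ‖cev y P‖ ≤ C * Real.exp (k * ∑ i, |y i|) := by
  have hS : ∀ y : Fin n → ℝ, 0 ≤ ∑ i, |y i| := fun y => Finset.sum_nonneg fun _ _ => abs_nonneg _
  induction P using MvPolynomial.induction_on with
  | C a => exact ⟨‖a‖, 0, norm_nonneg _, le_refl _, fun y => by simp [cev]⟩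
  | add p q hp hq =>
    obtain ⟨C, k, hC, hk, h⟩ := hp
    obtain ⟨C', k', hC', hk', h'⟩ := hq
    refine ⟨C + C', k + k', by positivity, by positivity, fun y => ?_⟩
    have := hS y
    rw [map_add, add_mul]
    refine (norm_add_le _ _).trans (add_le_add ((h y).trans ?_) ((h' y).trans ?_))
    · gcongr; linarith
    · gcongr; linarith
  | mul_X p i hp =>
    obtain ⟨C, k, hC, hk, h⟩ := hp
    refine ⟨C, k + 1, hC, by positivity, fun y => ?_⟩
    rw [map_mul, norm_mul, add_mul, Real.exp_add, ← mul_assoc]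
    refine mul_le_mul (h y) ?_ (norm_nonneg _) (by positivity)
    simp only [cev, MvPolynomial.aeval_X, Complex.norm_real, Real.norm_eq_abs, one_mul]
    have h1 : |y i| ≤ ∑ i, |y i| := Finset.single_le_sum (f := fun i => |y i|) (fun i _ => abs_nonneg _) (Finset.mem_univ i)
    have := Real.add_one_le_exp (∑ i, |y i|)
    linarith

lemma M1_eq_M2 {n N : ℕ} (hn : n ≤ N) (c : ℝ) : M1 n N c = M2 n N c := by
  refine moment_det _ _ (fun d hd => M1_exp c d hd) (fun d hd => M2_exp c d) fun P => ?_
  set Q : MvPolynomial (Fin n) ℂ := MvPolynomial.aeval (fun i => MvPolynomial.C (c:ℂ) * MvPolynomial.X i) P with hQ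
  have hcQ : ∀ x : Fin n → ℝ, cev x Q = cev (c • x) P := by
    intro x
    have h3 : (cev x).comp (MvPolynomial.aeval (fun i => MvPolynomial.C (c:ℂ) * MvPolynomial.X i)) = cev (c • x) := by
      apply MvPolynomial.algHom_ext
      intro k
      simp [cev]
    exact congrArg (fun f => f P) h3
  rw [(M2_integrable c _ (cev_cont P)).2]
  have hint : ∀ σ : Fin n ↪ Fin N, Integrable (fun x => cev (fun i => eig (herm (c • x)) (σ i)) P) (gs (Fin N × Fin N)) := by
    intro σ
    obtain ⟨C, k, hC, hk, h⟩ := cev_bound P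
    refine ((exp_eig_int c k hk σ).const_mul C).mono' ?_ (Filter.Eventually.of_forall fun x => h _)
    exact ((cev_cont P).measurable.comp (meas_eigσ c σ)).aestronglyMeasurable
  rw [M1, integral_finset_sum_measure]
  · simp only [integral_map (meas_eigσ c _).aemeasurable (cev_cont P).aestronglyMeasurable]
    rw [← integral_finset_sum _ (fun σ _ => hint σ)]
    have := npoint_moment hn Q
    have e : ∀ x : Fin N × Fin N → ℝ, ∑ σ : Fin n ↪ Fin N, cev (fun i => eig (herm (c • x)) (σ i)) P = ∑ σ : Fin n ↪ Fin N, cev (fun i => eig (herm x) (σ i)) Q := by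
      intro x
      simp only [hcQ]
      exact psum_eq_cev (fun i => eig (herm (c • x)) i) (fun i => c * eig (herm x) i) (fun k => psum_smul c x k) P
    simp only [e]
    rw [this]
    change ∫ x, cev x _ ∂_ = _
    congr 1
    ext x
    rw [map_mul, cev_dK, hcQ, mul_comm]
  · intro σ _
    rw [integrable_map_measure (cev_cont P).aestronglyMeasurable (meas_eigσ c σ).aemeasurable]
    exact hint σ

end

section
open MeasureTheory ProbabilityTheory


lemma gs_dens (ι : Type*) [Fintype ι] : gs ι = (volume : Measure (ι → ℝ)).withDensity (fun x => ENNReal.ofReal (∏ i, gaussianPDFReal 0 1 (x i))) := by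
  rw [gs]
  refine Measure.pi_eq fun s hs => ?_
  rw [withDensity_apply _ (MeasurableSet.univ_pi hs)]
  have hcont : Continuous (fun x : ι → ℝ => ∏ i, gaussianPDFReal 0 1 (x i)) := by
    unfold gaussianPDFReal; fun_prop
  have h1 : ∀ i, (gaussianReal 0 1) (s i) = ENNReal.ofReal (∫ x, (s i).indicator (gaussianPDFReal 0 1) x) := by
    intro i
    rw [gaussianReal_apply_eq_integral _ one_ne_zero, integral_indicator (hs i)]
  simp only [h1]
  rw [← ENNReal.ofReal_prod_of_nonneg (fun i _ => integral_nonneg fun x => Set.indicator_nonneg (fun x _ => gaussianPDFReal_nonneg _ _ _) x)]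
  rw [← integral_fintype_prod_volume_eq_prod (fun i => (s i).indicator (gaussianPDFReal 0 1))]
  have hi : ∀ i, Integrable ((s i).indicator (gaussianPDFReal 0 1)) := fun i => (integrable_gaussianPDFReal 0 1).indicator (hs i)
  have hii : Integrable (fun x : ι → ℝ => ∏ i, (s i).indicator (gaussianPDFReal 0 1) (x i)) volume := Integrable.fintype_prod hi
  rw [ofReal_integral_eq_lintegral_ofReal hii (Filter.Eventually.of_forall fun x => Finset.prod_nonneg fun i _ => Set.indicator_nonneg (fun x _ => gaussianPDFReal_nonneg _ _ _) _)]
  rw [← lintegral_indicator (MeasurableSet.univ_pi hs)]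
  congr 1
  ext x
  by_cases hx : x ∈ Set.univ.pi s
  · rw [Set.indicator_of_mem hx]
    congr 1
    refine Finset.prod_congr rfl fun i _ => ?_
    rw [Set.indicator_of_mem (hx i (Set.mem_univ i))]
  · rw [Set.indicator_of_notMem hx]
    simp only [Set.mem_univ_pi, not_forall] at hx
    obtain ⟨i, hi⟩ := hx
    rw [Finset.prod_eq_zero (Finset.mem_univ i) (Set.indicator_of_notMem hi _)]; simp

/-- correlation density -/
def Dn (N n : ℕ) (r : ℝ) (x : Fin n → ℝ) : ℝ := r ^ n * ((∏ i, gaussianPDFReal 0 1 (r * x i)) * dK N n (r • x))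

lemma gcont (n : ℕ) : Continuous (fun x : Fin n → ℝ => ∏ i, gaussianPDFReal 0 1 (x i)) := by
  unfold gaussianPDFReal; fun_prop

lemma M2_dens (N n : ℕ) (r : ℝ) (hr : 0 < r) : M2 n N r⁻¹ = volume.withDensity (fun x => ENNReal.ofReal (Dn N n r x)) := by
  have hdm : Measurable (fun x => ENNReal.ofReal (dK N n x)) := (dK_cont N n).measurable.ennreal_ofReal
  have hgm : Measurable (fun x : Fin n → ℝ => ENNReal.ofReal (∏ i, gaussianPDFReal 0 1 (x i))) := (gcont n).measurable.ennreal_ofReal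
  rw [M2, gs_dens, ← withDensity_mul _ hgm hdm]
  have hm : Measurable (fun x : Fin n → ℝ => r⁻¹ • x) := measurable_const_smul _
  have hm' : Measurable (fun x : Fin n → ℝ => r • x) := measurable_const_smul _
  ext B hB
  rw [Measure.map_apply hm hB, withDensity_apply _ (hm hB), withDensity_apply _ hB]
  set g : (Fin n → ℝ) → ENNReal := fun x => ENNReal.ofReal (∏ i, gaussianPDFReal 0 1 (x i)) * ENNReal.ofReal (dK N n x) with hg
  have hgme : Measurable g := hgm.mul hdm
  have h1 := setLIntegral_map (μ := (volume : Measure (Fin n → ℝ))) hB (hgme.comp hm') hm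
  have h2 : (volume : Measure (Fin n → ℝ)).map (fun x => r⁻¹ • x) = ENNReal.ofReal (r ^ n) • volume := by
    rw [Measure.map_addHaar_smul _ (inv_ne_zero hr.ne')]
    simp [abs_of_pos hr]
  rw [h2] at h1
  simp only [Function.comp_def, smul_smul, mul_inv_cancel₀ hr.ne', one_smul] at h1
  change ∫⁻ a in _, g a = _
  rw [← h1, Measure.restrict_smul, lintegral_smul_measure, smul_eq_mul, ← lintegral_const_mul _ (f := fun a => g (r • a)) (hgme.comp hm')]
  congr 1
  ext x
  rw [Dn, ENNReal.ofReal_mul (by positivity), ENNReal.ofReal_mul (Finset.prod_nonneg fun i _ => gaussianPDFReal_nonneg _ _ _)]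
  simp [hg]

lemma Dn_nonneg (N n : ℕ) (r : ℝ) (hr : 0 < r) (x : Fin n → ℝ) : 0 ≤ Dn N n r x :=
  mul_nonneg (by positivity) (mul_nonneg (Finset.prod_nonneg fun i _ => gaussianPDFReal_nonneg _ _ _) (dK_nonneg _ _ _))

lemma Dn_cont (N n : ℕ) (r : ℝ) : Continuous (Dn N n r) := by
  unfold Dn
  have h1 := dK_cont N n
  have h2 := gcont n
  have h3 : Continuous (fun x : Fin n → ℝ => r • x) := continuous_const_smul r
  exact continuous_const.mul ((h2.comp h3).mul (h1.comp h3))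

/-- complex determinant -/
def DC (N n : ℕ) (x : Fin n → ℝ) (w : ℂ) : ℂ := Matrix.det (Matrix.of fun i j : Fin n => w * kernelK N (x i * w) (x j * w))

lemma hermiteH_real (k : ℕ) (x : ℝ) : hermiteH k x = (hR k x : ℂ) := by
  rw [hermiteH, hR]
  have : ((x : ℝ) : ℂ) = ((Complex.ofRealAm).restrictScalars ℤ) x := rfl
  rw [this, Polynomial.aeval_algHom_apply]; rfl

lemma kernelK_real (N : ℕ) (x y : ℝ) : kernelK N x y =
    (((Real.sqrt (2 * Real.pi))⁻¹ * Real.exp (-x^2/4) * Real.exp (-y^2/4) * ∑ k ∈ Finset.range N, (k.factorial : ℝ)⁻¹ * (hR k x * hR k y) : ℝ) : ℂ) := by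
  have hpi : (Real.sqrt (2 * Real.pi)) = (2 * Real.pi) ^ ((1:ℝ)/4) * (2 * Real.pi) ^ ((1:ℝ)/4) := by
    rw [← Real.rpow_add (by positivity), Real.sqrt_eq_rpow]; norm_num
  rw [kernelK, Finset.mul_sum, Complex.ofReal_sum]
  refine Finset.sum_congr rfl fun k _ => ?_
  rw [hermitePhi, hermitePhi, hermiteP, hermiteP, hermiteH_real, hermiteH_real, hpi]
  have e : ∀ x : ℝ, Complex.exp (-(x:ℂ)^2/4) = ((Real.exp (-x^2/4) : ℝ) : ℂ) := by
    intro x; push_cast; rfl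
  rw [e, e]
  norm_cast
  have hf : ((k.factorial : ℝ)) = Real.sqrt k.factorial * Real.sqrt k.factorial := (Real.mul_self_sqrt (by positivity)).symm
  have hs : Real.sqrt k.factorial ≠ 0 := by positivity
  have h2 : (2 * Real.pi) ^ ((1:ℝ)/4) ≠ 0 := by positivity
  nth_rw 3 [hf]
  generalize Real.sqrt k.factorial = s at *
  generalize (2 * Real.pi) ^ ((1:ℝ)/4) = t at *
  field_simp

lemma DC_real (N n : ℕ) (x : Fin n → ℝ) (r : ℝ) : DC N n x r = (Dn N n r x : ℂ) := by
  rw [DC, Dn, dK_eq]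
  set m := (Matrix.of fun i j : Fin n => ∑ k ∈ Finset.range N, (k.factorial : ℝ)⁻¹ * (hR k ((r • x) i) * hR k ((r • x) j))) with hm
  set e : Fin n → ℝ := fun i => Real.exp (-(r * x i)^2/4) with he
  have h1 : (Matrix.of fun i j : Fin n => (r:ℂ) * kernelK N (x i * r) (x j * r)) = Complex.ofRealHom.mapMatrix
      (Matrix.diagonal (fun i => r * (Real.sqrt (2 * Real.pi))⁻¹ * e i) * m * Matrix.diagonal e) := by
    ext i j
    have := kernelK_real N (r * x i) (r * x j)
    rw [RingHom.mapMatrix_apply, Matrix.map_apply, Matrix.mul_diagonal, Matrix.diagonal_mul, Matrix.of_apply]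
    rw [mul_comm (x i : ℂ), mul_comm (x j : ℂ)]
    rw [Complex.ofReal_mul, Complex.ofReal_mul] at this
    rw [this, Complex.ofRealHom_eq_coe, ← Complex.ofReal_mul]
    congr 1
    simp only [hm, he, Matrix.of_apply, Pi.smul_apply, smul_eq_mul]
    ring
  rw [h1, ← RingHom.map_det, Complex.ofRealHom_eq_coe]
  congr 1
  rw [Matrix.det_mul, Matrix.det_mul, Matrix.det_diagonal, Matrix.det_diagonal]
  have h2 : (∏ i, r * (Real.sqrt (2 * Real.pi))⁻¹ * e i) * (∏ i, e i) = r ^ n * ∏ i, gaussianPDFReal 0 1 (r * x i) := by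
    rw [← Finset.prod_mul_distrib, show r ^ n = ∏ _i : Fin n, r by simp, ← Finset.prod_mul_distrib]
    refine Finset.prod_congr rfl fun i _ => ?_
    rw [gaussianPDFReal]
    simp only [he, NNReal.coe_one, mul_one, sub_zero]
    rw [mul_assoc, ← Real.exp_add, mul_assoc]
    congr 3; ring
  rw [mul_right_comm, h2]; ring

end

section
open MeasureTheory ProbabilityTheory


lemma polar_lint {E : Type*} [NormedAddCommGroup E] [NormedSpace ℝ E] [FiniteDimensional ℝ E] [Nontrivial E]
    [MeasurableSpace E] [BorelSpace E] (μ : Measure E) [μ.IsAddHaarMeasure] (F : E → ENNReal) (hF : Measurable F) :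
    ∫⁻ x, F x ∂μ = ∫⁻ r in Set.Ioi (0:ℝ), ENNReal.ofReal (r ^ (Module.finrank ℝ E - 1)) * ∫⁻ θ : Metric.sphere (0:E) 1, F (r • (θ:E)) ∂μ.toSphere := by
  have h1 : ∫⁻ x, F x ∂μ = ∫⁻ x : ({(0)}ᶜ : Set E), F x.1 ∂(μ.comap (↑)) := by
    rw [lintegral_subtype_comap (measurableSet_singleton _).compl, restrict_compl_singleton]
  rw [h1]
  have h2 := μ.measurePreserving_homeomorphUnitSphereProd.lintegral_comp_emb (Homeomorph.measurableEmbedding _)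
    (fun p => F ((p.2 : ℝ) • (p.1 : E)))
  have h3 : ∀ x : ({(0)}ᶜ : Set E), ((homeomorphUnitSphereProd E x).2 : ℝ) • ((homeomorphUnitSphereProd E x).1 : E) = x.1 := by
    intro x
    have hx : ‖(x:E)‖ ≠ 0 := norm_ne_zero_iff.2 x.2
    simp [smul_smul, hx]
  simp only [h3] at h2
  rw [h2, lintegral_prod_symm']
  · rw [Measure.volumeIoiPow, lintegral_withDensity_eq_lintegral_mul]
    · simp only [Pi.mul_apply]
      exact lintegral_subtype_comap measurableSet_Ioi (fun r => ENNReal.ofReal (r ^ (Module.finrank ℝ E - 1)) * ∫⁻ θ : Metric.sphere (0:E) 1, F (r • (θ:E)) ∂μ.toSphere)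
    · exact ((measurable_subtype_coe.pow_const _)).ennreal_ofReal
    · apply Measurable.lintegral_prod_right'  (f := fun p : Set.Ioi (0:ℝ) × Metric.sphere (0:E) 1 => F ((p.1 : ℝ) • (p.2 : E)))
      exact hF.comp (by fun_prop)
  · exact hF.comp (by fun_prop)

abbrev EN (N : ℕ) := EuclideanSpace ℝ (Fin N × Fin N)

def gE (N : ℕ) : Measure (EN N) := (gs (Fin N × Fin N)).map (WithLp.toLp 2)

instance (N : ℕ) : IsProbabilityMeasure (gE N) := Measure.isProbabilityMeasure_map (by fun_prop)

lemma gE_inv {N : ℕ} (T : EN N ≃ₗᵢ[ℝ] EN N) : (gE N).map T = gE N := by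
  have : gE N = stdGaussian (EN N) := by
    rw [gE, gs]; exact map_pi_eq_stdGaussian
  rw [this, stdGaussian_map]

lemma gE_dens (N : ℕ) : ∃ C : ℝ, gE N = volume.withDensity (fun x => ENNReal.ofReal (C * Real.exp (-‖x‖^2/2))) := by
  refine ⟨(√(2 * Real.pi * (1:NNReal)))⁻¹ ^ (Fintype.card (Fin N × Fin N)), ?_⟩
  rw [gE, gs_dens]
  ext s hs
  rw [Measure.map_apply (by fun_prop) hs, withDensity_apply _ hs, withDensity_apply _ (hs.preimage (by fun_prop))]
  rw [← (PiLp.volume_preserving_toLp (Fin N × Fin N)).setLIntegral_comp_preimage hs (by fun_prop)]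
  refine lintegral_congr fun x => ?_
  congr 1
  simp only [gaussianPDFReal, Finset.prod_mul_distrib, Finset.prod_const, Finset.card_univ]
  congr 1
  rw [← Real.exp_sum]
  congr 1
  rw [EuclideanSpace.norm_sq_eq, neg_div, Finset.sum_div, ← Finset.sum_neg_distrib]
  refine Finset.sum_congr rfl fun i _ => ?_
  simp [neg_div]

end

section
open MeasureTheory ProbabilityTheory


section
variable {E : Type*} [NormedAddCommGroup E] [InnerProductSpace ℝ E] [FiniteDimensional ℝ E]
    [MeasurableSpace E] [BorelSpace E]

lemma exists_iso (t t' : E) (h : ‖t‖ = ‖t'‖) : ∃ T : E ≃ₗᵢ[ℝ] E, T t = t' :=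
  ⟨_, Submodule.reflection_sub h⟩

lemma charFun_inv (μ : Measure E) (h : ∀ T : E ≃ₗᵢ[ℝ] E, μ.map T = μ) (t t' : E) (ht : ‖t‖ = ‖t'‖) :
    charFun μ t = charFun μ t' := by
  obtain ⟨T, rfl⟩ := exists_iso t t' ht
  conv_rhs => rw [← h T]
  rw [charFun_apply, charFun_apply, integral_map (by fun_prop) (Continuous.aestronglyMeasurable (by fun_prop))]
  simp

lemma sphere_unique (μ σ : Measure E) [IsProbabilityMeasure μ] [IsProbabilityMeasure σ] (ρ : ℝ) (hρ : 0 < ρ)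
    (hμ : ∀ᵐ x ∂μ, ‖x‖ = ρ) (hσ : ∀ᵐ x ∂σ, ‖x‖ = ρ) (iμ : ∀ T : E ≃ₗᵢ[ℝ] E, μ.map T = μ)
    (iσ : ∀ T : E ≃ₗᵢ[ℝ] E, σ.map T = σ) : μ = σ := by
  have key : ∀ (μ σ : Measure E) [IsProbabilityMeasure μ] [IsProbabilityMeasure σ] 
    (hσ : ∀ᵐ x ∂σ, ‖x‖ = ρ) (iμ : ∀ T : E ≃ₗᵢ[ℝ] E, μ.map T = μ) (t : E), charFun μ t = ∫ y, ∫ x, Complex.exp (((‖t‖/ρ) * inner ℝ x y : ℝ) * Complex.I) ∂μ ∂σ := by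
    intro μ σ _ _ hσ iμ t
    have : ∫ y, charFun μ t ∂σ = charFun μ t := by simp
    rw [← this]
    refine integral_congr_ae ?_
    filter_upwards [hσ] with y hy
    rw [charFun_inv μ iμ t ((‖t‖/ρ) • y) (by rw [norm_smul, hy, Real.norm_of_nonneg (by positivity)]; field_simp), charFun_apply]
    simp [inner_smul_right]
  refine Measure.ext_of_charFun ?_
  ext t
  rw [key μ σ hσ iμ, key σ μ hμ iσ, integral_integral_swap]
  · simp_rw [real_inner_comm]
  · refine Integrable.of_bound (C := 1) (Continuous.aestronglyMeasurable (by fun_prop)) (Filter.Eventually.of_forall fun p => ?_)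
    simp only [Function.uncurry]
    rw [Complex.norm_exp_ofReal_mul_I]
end

end

section
open MeasureTheory ProbabilityTheory


lemma gE_ne {N : ℕ} (hN : 1 ≤ N) : ∀ᵐ x ∂(gE N), x ≠ 0 := by
  obtain ⟨C, hC⟩ := gE_dens N
  rw [hC]
  refine (withDensity_absolutelyContinuous _ _).ae_le ?_
  haveI : NeZero N := ⟨by omega⟩
  have : Nontrivial (EN N) := inferInstance
  exact Measure.ae_ne volume 0

lemma hse_pull {N : ℕ} (hN : 1 ≤ N) (u : ℝ) (hu : 0 < u) (ν : Measure (HermMat N)) (h : IsHSE (u / (N:ℝ)^2) ν) :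
    ν.map (hermL N).symm = (gE N).map (fun x => (√u/‖x‖)•x) := by
  obtain ⟨hp, hc, hi⟩ := h
  have hN0 : (N:ℝ) ≠ 0 := by positivity
  have hm : Measurable (fun x : EN N => (√u/‖x‖)•x) := by fun_prop
  haveI : IsProbabilityMeasure (ν.map (hermL N).symm) := Measure.isProbabilityMeasure_map meas_hermL_symm.aemeasurable
  haveI : IsProbabilityMeasure ((gE N).map (fun x => (√u/‖x‖)•x)) := Measure.isProbabilityMeasure_map hm.aemeasurable
  refine sphere_unique _ _ (√u) (Real.sqrt_pos.2 hu) ?_ ?_ ?_ ?_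
  · rw [ae_map_iff meas_hermL_symm.aemeasurable (measurableSet_eq_fun (by fun_prop) (by fun_prop))]
    have : ∀ᵐ A ∂ν, trSq A = (u / (N:ℝ)^2) * N^2 := hc
    filter_upwards [this] with A hA
    have h1 := herm_trSq ((hermL N).symm A)
    rw [LinearEquiv.apply_symm_apply, hA, div_mul_cancel₀ _ (by positivity)] at h1
    rw [h1, Real.sqrt_sq (norm_nonneg _)]
  · rw [ae_map_iff hm.aemeasurable (measurableSet_eq_fun (by fun_prop) (by fun_prop))]
    filter_upwards [gE_ne hN] with x hx
    rw [norm_smul, norm_div, norm_norm, Real.norm_of_nonneg (Real.sqrt_nonneg _), div_mul_cancel₀ _ (norm_ne_zero_iff.2 hx)]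
  · intro T
    have hT : Measurable T := by fun_prop
    have := hi ((hermL N).symm ≪≫ₗ T.toLinearEquiv ≪≫ₗ hermL N) ?_
    · conv_rhs => rw [← this]
      rw [Measure.map_map hT meas_hermL_symm, Measure.map_map meas_hermL_symm]
      · congr 1
        ext A
        simp
      · exact meas_hermL.comp (hT.comp meas_hermL_symm)
    · intro A B
      obtain ⟨a, rfl⟩ := (hermL N).surjective A
      obtain ⟨b, rfl⟩ := (hermL N).surjective B
      simp only [LinearEquiv.trans_apply, LinearEquiv.symm_apply_apply, herm_tr, LinearIsometryEquiv.coe_toLinearEquiv, LinearIsometryEquiv.inner_map_map]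
  · intro T
    have hT : Measurable T := by fun_prop
    conv_rhs => rw [← gE_inv T]
    rw [Measure.map_map hT hm, Measure.map_map hm hT]
    congr 1
    ext x
    simp

lemma hse_lint {N : ℕ} (hN : 1 ≤ N) (u : ℝ) (hu : 0 < u) (ν : Measure (HermMat N)) (h : IsHSE (u / (N:ℝ)^2) ν)
    (f : HermMat N → ENNReal) (hf : Measurable f) :
    ∫⁻ A, f A ∂ν = ∫⁻ x, f (hermL N ((√u/‖x‖)•x)) ∂(gE N) := by
  have h1 := hse_pull hN u hu ν h
  have h2 : ∫⁻ A, f A ∂ν = ∫⁻ x, f (hermL N x) ∂(ν.map (hermL N).symm) := by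
    rw [lintegral_map (f := fun x => f (hermL N x)) (hf.comp meas_hermL) meas_hermL_symm]
    simp
  rw [h2, h1, lintegral_map (f := fun x => f (hermL N x)) (hf.comp meas_hermL) (by fun_prop)]

/-- gaussian mixture of spheres -/
lemma mix_aux {N : ℕ} (hN : 1 ≤ N) : ∃ K : ENNReal, ∀ (g : EN N → ENNReal), Measurable g → ∀ b : ℝ, 0 < b →
    ∫⁻ x, g ((√b)⁻¹ • x) ∂(gE N) = K * ∫⁻ u in Set.Ioi (0:ℝ), ENNReal.ofReal (b ^ ((N^2 : ℕ) / 2 : ℝ) * u ^ ((N^2 : ℕ) / 2 - 1 : ℝ) * Real.exp (-(b * u) / 2)) * ∫⁻ x, g ((√u/‖x‖)•x) ∂(gE N) := by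
  obtain ⟨C, hC⟩ := gE_dens N
  haveI : NeZero N := ⟨by omega⟩
  have : Nontrivial (EN N) := inferInstance
  have hd : Module.finrank ℝ (EN N) = N^2 := by simp [sq]
  have hm1 : 1 ≤ N^2 := Nat.one_le_pow _ _ hN
  set w : ℝ → ENNReal := fun r => ENNReal.ofReal (r ^ (N^2 - 1)) * ENNReal.ofReal (C * Real.exp (-r^2/2)) with hw
  have hwm : Measurable w := by fun_prop
  have hG : ∀ G : EN N → ENNReal, Measurable G → ∫⁻ x, G x ∂(gE N) = ∫⁻ r in Set.Ioi (0:ℝ), w r * ∫⁻ θ : Metric.sphere (0:EN N) 1, G (r • (θ:EN N)) ∂volume.toSphere := by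
    intro G hGm
    rw [hC, lintegral_withDensity_eq_lintegral_mul _ (by fun_prop) hGm, polar_lint _ _ (by fun_prop), hd]
    refine setLIntegral_congr_fun measurableSet_Ioi fun r (hr : 0 < r) => ?_
    simp only [Pi.mul_apply, norm_smul, hw, mul_assoc]
    congr 1
    rw [← lintegral_const_mul _ (by fun_prop)]
    refine lintegral_congr fun θ => ?_
    simp
  set J := ∫⁻ r in Set.Ioi (0:ℝ), w r with hJ
  set τ := (volume : Measure (EN N)).toSphere Set.univ with hτ
  have hJτ : J * τ = 1 := by
    have := hG (fun _ => 1) measurable_const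
    simp only [lintegral_const, measure_univ, one_mul, ] at this
    rw [lintegral_mul_const _ hwm] at this
    exact this.symm
  have hJ0 : J ≠ 0 := fun h => by simp [h] at hJτ
  have hJt : J ≠ ⊤ := by
    intro h
    have : τ ≠ 0 := fun h => by simp [h] at hJτ
    rw [h, ENNReal.top_mul this] at hJτ
    simp at hJτ
  refine ⟨J⁻¹ * ENNReal.ofReal (C / 2), fun g hg b hb => ?_⟩
  have hS : ∀ u ∈ Set.Ioi (0:ℝ), ∫⁻ x, g ((√u/‖x‖)•x) ∂(gE N) = J * ∫⁻ θ : Metric.sphere (0:EN N) 1, g (√u • (θ:EN N)) ∂volume.toSphere := by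
    intro u hu
    rw [hG _ (by fun_prop), hJ, ← lintegral_mul_const _ hwm]
    refine setLIntegral_congr_fun measurableSet_Ioi fun r (hr : 0 < r) => ?_
    congr 1
    refine lintegral_congr fun θ => ?_
    rw [smul_smul, norm_smul, Real.norm_of_nonneg hr.le]
    simp [hr.ne']
  rw [setLIntegral_congr_fun measurableSet_Ioi fun u hu => by rw [hS u hu]]
  rw [hG _ (by fun_prop)]
  have himg : Set.Ioi (0:ℝ) = (fun u => √b * √u) '' Set.Ioi 0 := by
    ext r
    constructor
    · intro (hr : 0 < r)
      refine ⟨(r/√b)^2, by simp only [Set.mem_Ioi]; positivity, ?_⟩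
      simp only
      rw [Real.sqrt_sq (by positivity)]
      field_simp
    · rintro ⟨u, hu, rfl⟩
      simp only [Set.mem_Ioi] at *
      positivity
  conv_lhs => rw [himg]
  rw [lintegral_image_eq_lintegral_abs_deriv_mul measurableSet_Ioi (f' := fun u => √b * (1 / (2 * √u)))
    (fun u hu => ((Real.hasDerivAt_sqrt (ne_of_gt hu)).const_mul _).hasDerivWithinAt)]
  · rw [← lintegral_const_mul]
    · refine setLIntegral_congr_fun measurableSet_Ioi fun u (hu : 0 < u) => ?_
      simp only [hw, smul_smul]
      have e1 : (√b)⁻¹ * (√b * √u) = √u := by field_simp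
      simp only [e1]
      generalize ∫⁻ θ : Metric.sphere (0:EN N) 1, g (√u • (θ:EN N)) ∂volume.toSphere = Q
      rw [abs_of_nonneg (by positivity)]
      have e2 : √b * (1 / (2 * √u)) * (√b * √u) ^ (N^2-1) * Real.exp (-(√b * √u)^2/2) =
         1/2 * (b ^ ((N^2 : ℕ) / 2 : ℝ) * u ^ ((N^2 : ℕ) / 2 - 1 : ℝ) * Real.exp (-(b * u) / 2)) := by
        have a1 : ∀ a : ℝ, 0 < a → a ^ ((N^2 : ℕ) / 2 : ℝ) = √a * √a ^ (N^2-1) := by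
          intro a ha
          rw [← pow_succ', Nat.sub_add_cancel hm1, Real.sqrt_eq_rpow, ← Real.rpow_natCast, ← Real.rpow_mul ha.le]
          congr 1
          ring
        rw [Real.rpow_sub_one hu.ne', a1 b hb, a1 u hu, mul_pow (√b) (√u) 2, Real.sq_sqrt hb.le, Real.sq_sqrt hu.le, mul_pow]
        have : u = √u * √u := (Real.mul_self_sqrt hu.le).symm
        have h3 : √u / u = (√u)⁻¹ := by rw [div_eq_iff hu.ne']; nth_rewrite 3 [this]; field_simp
        have h4 : √u * √u ^ (N^2-1) / u = √u ^ (N^2-1) * (√u)⁻¹ := by rw [← h3]; ring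
        rw [h4]
        field_simp
      have e3 : ENNReal.ofReal (√b * (1 / (2 * √u))) * ENNReal.ofReal ((√b * √u) ^ (N^2-1)) * ENNReal.ofReal (Real.exp (-(√b * √u)^2/2)) = ENNReal.ofReal (1/2) * ENNReal.ofReal (b ^ ((N^2 : ℕ) / 2 : ℝ) * u ^ ((N^2 : ℕ) / 2 - 1 : ℝ) * Real.exp (-(b * u) / 2)) := by
        rw [← ENNReal.ofReal_mul (by positivity), ← ENNReal.ofReal_mul (by positivity), ← ENNReal.ofReal_mul (by positivity), e2]
      rw [ENNReal.ofReal_mul' (p := C) (Real.exp_pos _).le, div_eq_mul_one_div C 2, ENNReal.ofReal_mul' (p := C) (by norm_num)]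
      calc _ = ENNReal.ofReal C * (ENNReal.ofReal (√b * (1 / (2 * √u))) * ENNReal.ofReal ((√b * √u) ^ (N^2-1)) * ENNReal.ofReal (Real.exp (-(√b * √u)^2/2))) * Q := by ring
        _ = (J⁻¹ * J) * (ENNReal.ofReal C * (ENNReal.ofReal (1/2) * ENNReal.ofReal (b ^ ((N^2 : ℕ) / 2 : ℝ) * u ^ ((N^2 : ℕ) / 2 - 1 : ℝ) * Real.exp (-(b * u) / 2))) * Q) := by
          rw [e3, ENNReal.inv_mul_cancel hJ0 hJt, one_mul]
        _ = _ := by ring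
    · have hq : Measurable fun u : ℝ => ∫⁻ θ : Metric.sphere (0:EN N) 1, g (√u • (θ:EN N)) ∂volume.toSphere := by
        apply Measurable.lintegral_prod_right' (f := fun p : ℝ × Metric.sphere (0:EN N) 1 => g (√p.1 • (p.2 : EN N)))
        fun_prop
      fun_prop
  · intro x hx y hy h
    simp only [mul_eq_mul_left_iff, (Real.sqrt_pos.2 hb).ne', or_false] at h
    exact (Real.sqrt_inj (le_of_lt hx) (le_of_lt hy)).1 h

end

section
open MeasureTheory ProbabilityTheory


def wt (N : ℕ) (b u : ℝ) : ℝ := (2 ^ ((N^2 : ℕ) / 2 : ℝ) * Real.Gamma ((N^2 : ℕ) / 2 : ℝ))⁻¹ * (b ^ ((N^2 : ℕ) / 2 : ℝ) * u ^ ((N^2 : ℕ) / 2 - 1 : ℝ) * Real.exp (-(b * u) / 2))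

lemma wt_c_pos (N : ℕ) (hN : 1 ≤ N) : 0 < (2 ^ ((N^2 : ℕ) / 2 : ℝ) * Real.Gamma ((N^2 : ℕ) / 2 : ℝ)) := by
  have : 0 < Real.Gamma ((N^2 : ℕ) / 2 : ℝ) := Real.Gamma_pos_of_pos (by positivity)
  positivity

lemma mix {N : ℕ} (hN : 1 ≤ N) (g : EN N → ENNReal) (hg : Measurable g) (b : ℝ) (hb : 0 < b) :
    ∫⁻ x, g ((√b)⁻¹ • x) ∂(gE N) = ∫⁻ u in Set.Ioi (0:ℝ), ENNReal.ofReal (wt N b u) * ∫⁻ x, g ((√u/‖x‖)•x) ∂(gE N) := by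
  obtain ⟨K, hK⟩ := mix_aux hN
  have hc := wt_c_pos N hN
  have h1 := hK (fun _ => 1) measurable_const 1 one_pos
  simp only [lintegral_const, measure_univ, one_mul, mul_one, Real.one_rpow] at h1
  have h2 : ∫⁻ u in Set.Ioi (0:ℝ), ENNReal.ofReal (u ^ ((N^2 : ℕ) / 2 - 1 : ℝ) * Real.exp (-u / 2)) = ENNReal.ofReal (2 ^ ((N^2 : ℕ) / 2 : ℝ) * Real.Gamma ((N^2 : ℕ) / 2 : ℝ)) := by
    have h3 := Real.integral_rpow_mul_exp_neg_mul_Ioi (a := ((N^2 : ℕ) / 2 : ℝ)) (r := 1/2) (by positivity) (by norm_num)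
    have h4 : ∀ u : ℝ, -(1/2 * u) = -u/2 := fun u => by ring
    simp only [h4, one_div_one_div] at h3
    rw [← h3, ofReal_integral_eq_lintegral_ofReal]
    · by_contra hni
      rw [integral_undef hni] at h3
      linarith
    · exact (ae_restrict_mem measurableSet_Ioi).mono fun u (hu : 0 < u) => by positivity
  rw [h2] at h1
  have hKe : K = ENNReal.ofReal (2 ^ ((N^2 : ℕ) / 2 : ℝ) * Real.Gamma ((N^2 : ℕ) / 2 : ℝ))⁻¹ := by
    rw [ENNReal.ofReal_inv_of_pos hc]
    exact ENNReal.eq_inv_of_mul_eq_one_left h1.symm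
  rw [hK g hg b hb, ← lintegral_const_mul']
  · refine lintegral_congr fun u => ?_
    rw [wt, ENNReal.ofReal_mul (p := (2 ^ ((N^2 : ℕ) / 2 : ℝ) * Real.Gamma ((N^2 : ℕ) / 2 : ℝ))⁻¹) (inv_nonneg.2 hc.le), hKe]; ring
  · rw [hKe]; exact ENNReal.ofReal_ne_top

def cnt {n N : ℕ} (B : Set (Fin n → ℝ)) (A : HermMat N) : ENNReal :=
  ∑ σ : Fin n ↪ Fin N, B.indicator 1 (fun i => eig A (σ i))

lemma cnt_meas {n N : ℕ} (B : Set (Fin n → ℝ)) (hB : MeasurableSet B) : Measurable (cnt (N := N) B) := by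
  unfold cnt
  refine Finset.measurable_sum _ fun σ _ => ?_
  exact (measurable_one.indicator hB).comp (measurable_pi_lambda _ fun i => meas_eig (σ i))

lemma cnt_card {n N : ℕ} (B : Set (Fin n → ℝ)) (A : HermMat N) : ((Nat.card {σ : Fin n → Fin N //
      Function.Injective σ ∧ (fun i => eig A (σ i)) ∈ B} : ℕ) : ENNReal) = cnt B A := by
  classical
  have e : {σ : Fin n → Fin N // Function.Injective σ ∧ (fun i => eig A (σ i)) ∈ B} ≃ {σ : Fin n ↪ Fin N // (fun i => eig A (σ i)) ∈ B} :=
    { toFun := fun s => ⟨⟨s.1, s.2.1⟩, s.2.2⟩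
      invFun := fun s => ⟨s.1, s.1.injective, s.2⟩
      left_inv := fun s => rfl
      right_inv := fun s => rfl }
  rw [Nat.card_congr e, Nat.card_eq_fintype_card, Fintype.card_subtype, cnt]
  simp only [Set.indicator, Pi.one_apply]
  rw [Finset.sum_boole]

lemma cnt_le {n N : ℕ} (B : Set (Fin n → ℝ)) (A : HermMat N) : cnt B A ≤ (Fintype.card (Fin n ↪ Fin N) : ENNReal) := by
  unfold cnt
  calc ∑ σ : Fin n ↪ Fin N, B.indicator 1 (fun i => eig A (σ i)) ≤ ∑ σ : Fin n ↪ Fin N, (1:ENNReal) := by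
        refine Finset.sum_le_sum fun σ _ => ?_
        simp only [Set.indicator, Pi.one_apply]
        split_ifs <;> simp
    _ = (Fintype.card (Fin n ↪ Fin N) : ENNReal) := by rw [Finset.sum_const, Finset.card_univ]; simp

lemma corr_lint {n N : ℕ} (ν : Measure (HermMat N)) [IsProbabilityMeasure ν] (B : Set (Fin n → ℝ)) (hB : MeasurableSet B) :
    ENNReal.ofReal (corrMass n ν B) = ∫⁻ A, cnt B A ∂ν := by
  have h1 : corrMass n ν B = ∫ A, (cnt B A).toReal ∂ν := by
    unfold corrMass
    refine integral_congr_ae (Filter.Eventually.of_forall fun A => ?_)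
    simp only [← cnt_card, ENNReal.toReal_natCast]
  rw [h1, integral_toReal (cnt_meas B hB).aemeasurable (Filter.Eventually.of_forall fun A => (cnt_le B A).trans_lt (ENNReal.natCast_lt_top _)), ENNReal.ofReal_toReal]
  refine ne_top_of_le_ne_top (b := (Fintype.card (Fin n ↪ Fin N) : ENNReal)) (ENNReal.natCast_ne_top _) ?_
  calc _ ≤ ∫⁻ A, (Fintype.card (Fin n ↪ Fin N) : ENNReal) ∂ν := lintegral_mono fun A => cnt_le B A
    _ = _ := by simp

lemma corr_univ {n N : ℕ} (hnN : n ≤ N) (ν : Measure (HermMat N)) [IsProbabilityMeasure ν] :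
    corrMass n ν Set.univ ≠ 0 := by
  intro h
  have := corr_lint (n := n) ν Set.univ MeasurableSet.univ
  rw [h] at this
  simp only [cnt, Set.indicator_univ, Pi.one_apply] at this
  simp at this
  have h2 : N.descFactorial n = 0 := by exact_mod_cast this.symm
  rw [Nat.descFactorial_eq_zero_iff_lt] at h2
  omega

lemma M1_cnt {n N : ℕ} (c : ℝ) (B : Set (Fin n → ℝ)) (hB : MeasurableSet B) :
    M1 n N c B = ∫⁻ x, cnt B (hermL N (c • x)) ∂(gE N) := by
  rw [gE, lintegral_map (f := fun x => cnt B (hermL N (c • x))) ((cnt_meas B hB).comp (meas_hermL.comp (by fun_prop))) (by fun_prop)]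
  unfold M1 cnt
  rw [Measure.finsetSum_apply, lintegral_finsetSum]
  · refine Finset.sum_congr rfl fun σ _ => ?_
    rw [Measure.map_apply (meas_eigσ c σ) hB, ← lintegral_indicator_one ((meas_eigσ c σ) hB)]
    rfl
  · intro σ _
    exact (measurable_one.indicator hB).comp (meas_eigσ c σ)

lemma corr_mix {n N : ℕ} (hN : 1 ≤ N) (ν : ℝ → Measure (HermMat N)) (hν : ∀ s : ℝ, 0 < s → IsHSE s (ν s))
    (B : Set (Fin n → ℝ)) (hB : MeasurableSet B) (b : ℝ) (hb : 0 < b) :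
    M1 n N (√b)⁻¹ B = ∫⁻ u in Set.Ioi (0:ℝ), ENNReal.ofReal (wt N b u) * ENNReal.ofReal (corrMass n (ν (u / (N:ℝ)^2)) B) := by
  rw [M1_cnt _ _ hB, mix hN (fun x => cnt B (hermL N x)) ((cnt_meas B hB).comp meas_hermL) b hb]
  refine setLIntegral_congr_fun measurableSet_Ioi fun u (hu : 0 < u) => ?_
  have h := hν (u / (N:ℝ)^2) (by positivity)
  haveI := h.1
  rw [corr_lint _ _ hB, hse_lint hN u hu _ h _ (cnt_meas B hB)]

end

section
open MeasureTheory ProbabilityTheory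


lemma R_good {n N : ℕ} (hnN : n ≤ N) (ν : Measure (HermMat N)) [IsProbabilityMeasure ν] (f : (Fin n → ℝ) → ℝ)
    (h : ∀ B : Set (Fin n → ℝ), MeasurableSet B → corrMass n ν B = ∫ x in B, f x) :
    (∀ᵐ x, 0 ≤ f x) ∧ ∀ B : Set (Fin n → ℝ), MeasurableSet B → ENNReal.ofReal (corrMass n ν B) = ∫⁻ x in B, ENNReal.ofReal (f x) := by
  have hi : Integrable f := by
    by_contra hni
    have := h Set.univ MeasurableSet.univ
    rw [setIntegral_univ, integral_undef hni] at this
    exact corr_univ hnN ν this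
  have h0 : ∀ᵐ x, 0 ≤ f x := by
    refine ae_nonneg_of_forall_setIntegral_nonneg hi fun s hs _ => ?_
    rw [← h s hs]
    exact integral_nonneg fun A => by positivity
  refine ⟨h0, fun B hB => ?_⟩
  rw [h B hB, ofReal_integral_eq_lintegral_ofReal hi.integrableOn (ae_restrict_of_ae h0)]

lemma wt_meas (N : ℕ) (b : ℝ) : Measurable (wt N b) := by
  unfold wt
  fun_prop

lemma stage1 {N n : ℕ} (hN : 1 ≤ N) (hnN : n ≤ N)
    (ν : ℝ → Measure (HermMat N)) (hν : ∀ s : ℝ, 0 < s → IsHSE s (ν s))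
    (R : ℝ → (Fin n → ℝ) → ℝ)
    (hRmeas : Measurable (fun q : {p : ℝ × (Fin n → ℝ) // 0 < p.1} => R q.1.1 q.1.2))
    (hRdens : ∀ s : ℝ, 0 < s → ∀ B : Set (Fin n → ℝ), MeasurableSet B →
      corrMass n (ν s) B = ∫ x in B, R s x) :
    ∀ᵐ x : Fin n → ℝ, ∃ f : ℝ → ℝ, Measurable f ∧ (∀ u, 0 < u → f u = R (u / (N:ℝ)^2) x) ∧
      (∀ᵐ u, 0 ≤ f u) ∧ ∀ b : ℚ, 0 < b → ∫⁻ u in Set.Ioi (0:ℝ), ENNReal.ofReal (wt N b u) * ENNReal.ofReal (f u) = ENNReal.ofReal (Dn N n √b x) := by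
  have hN0 : (0:ℝ) < (N:ℝ)^2 := by positivity
  classical
  set R' : ℝ × (Fin n → ℝ) → ℝ := fun p => if h : 0 < p.1 then R (p.1 / (N:ℝ)^2) p.2 else 0 with hR'
  have hm : Measurable R' := by
    have hS : MeasurableSet {p : ℝ × (Fin n → ℝ) | 0 < p.1} := measurableSet_lt measurable_const measurable_fst
    refine Measurable.dite (s := {p : ℝ × (Fin n → ℝ) | 0 < p.1}) (f := fun p => R (p.1.1 / (N:ℝ)^2) p.1.2) (g := fun _ => 0) ?_ measurable_const hS
    exact hRmeas.comp (g := fun q : {p : ℝ × (Fin n → ℝ) // 0 < p.1} => R q.1.1 q.1.2)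
      (f := fun p : {p : ℝ × (Fin n → ℝ) | 0 < p.1} => ⟨(p.1.1 / (N:ℝ)^2, p.1.2), div_pos p.2 hN0⟩) (by fun_prop)
  have hpos : ∀ u x, 0 < u → R' (u, x) = R (u / (N:ℝ)^2) x := fun u x hu => by simp [hR', hu]
  have hg : ∀ u, 0 < u → (∀ᵐ x, 0 ≤ R' (u, x)) ∧ ∀ B : Set (Fin n → ℝ), MeasurableSet B → ENNReal.ofReal (corrMass n (ν (u / (N:ℝ)^2)) B) = ∫⁻ x in B, ENNReal.ofReal (R' (u, x)) := by
    intro u hu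
    have hs := div_pos hu hN0
    haveI := (hν _ hs).1
    have := R_good hnN (ν (u / (N:ℝ)^2)) (R (u / (N:ℝ)^2)) (hRdens _ hs)
    simpa only [hpos u _ hu] using this
  have h1 : ∀ᵐ x, ∀ᵐ u, 0 ≤ R' (u, x) := by
    rw [← Measure.ae_ae_comm (p := fun u x => 0 ≤ R' (u, x)) (measurableSet_le measurable_const hm)]
    refine Filter.Eventually.of_forall fun u => ?_
    by_cases hu : 0 < u
    · exact (hg u hu).1
    · exact Filter.Eventually.of_forall fun x => by simp [hR', hu]
  have h2 : ∀ b : ℚ, 0 < b → ∀ᵐ x, ∫⁻ u in Set.Ioi (0:ℝ), ENNReal.ofReal (wt N b u) * ENNReal.ofReal (R' (u, x)) = ENNReal.ofReal (Dn N n √b x) := by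
    intro b hb
    have hb' : (0:ℝ) < b := by exact_mod_cast hb
    have hwm := wt_meas N b
    have hmp : Measurable (fun p : (Fin n → ℝ) × ℝ => ENNReal.ofReal (wt N b p.2) * ENNReal.ofReal (R' (p.2, p.1))) := by
      fun_prop
    refine ae_eq_of_forall_setLIntegral_eq_of_sigmaFinite (hmp.lintegral_prod_right') (Dn_cont N n √b).measurable.ennreal_ofReal fun B hB _ => ?_
    have h3 := corr_mix hN ν hν B hB b hb'
    rw [M1_eq_M2 hnN, M2_dens N n _ (Real.sqrt_pos.2 hb'), withDensity_apply _ hB] at h3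
    rw [h3, lintegral_lintegral_swap hmp.aemeasurable]
    refine setLIntegral_congr_fun measurableSet_Ioi fun u (hu : 0 < u) => ?_
    rw [(hg u hu).2 B hB, lintegral_const_mul]
    fun_prop
  have h3 : ∀ᵐ x, ∀ b : ℚ, 0 < b → ∫⁻ u in Set.Ioi (0:ℝ), ENNReal.ofReal (wt N b u) * ENNReal.ofReal (R' (u, x)) = ENNReal.ofReal (Dn N n √b x) := by
    rw [ae_all_iff]
    intro b
    by_cases hb : 0 < b
    · exact (h2 b hb).mono fun x hx _ => hx
    · exact Filter.Eventually.of_forall fun x h => absurd h hb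
  filter_upwards [h1, h3] with x hx1 hx3
  exact ⟨fun u => R' (u, x), by fun_prop, fun u hu => hpos u x hu, hx1, hx3⟩

end

section
open MeasureTheory ProbabilityTheory


lemma hermiteH_diff (k : ℕ) : Differentiable ℂ (hermiteH k) := by
  unfold hermiteH
  exact Polynomial.differentiable_aeval _

lemma DC_diff (N n : ℕ) (x : Fin n → ℝ) : Differentiable ℂ (DC N n x) := by
  have hphi : ∀ k, Differentiable ℂ (hermitePhi k) := by
    intro k
    unfold hermitePhi hermiteP
    have := hermiteH_diff k
    fun_prop
  have hent : ∀ i j, Differentiable ℂ (fun w : ℂ => w * kernelK N (x i * w) (x j * w)) := by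
    intro i j
    unfold kernelK
    fun_prop
  unfold DC
  simp only [Matrix.det_apply, Matrix.of_apply]
  fun_prop

lemma stage2 {N n : ℕ} (hN : 1 ≤ N) (x : Fin n → ℝ) (f : ℝ → ℝ) (hf : Measurable f) (hf0 : ∀ᵐ u, 0 ≤ f u)
    (h : ∀ b : ℚ, 0 < b → ∫⁻ u in Set.Ioi (0:ℝ), ENNReal.ofReal (wt N b u) * ENNReal.ofReal (f u) = ENNReal.ofReal (Dn N n √b x))
    (z : ℂ) (hz : 0 < z.re) :
    ∫ u in Set.Ioi (0:ℝ), (((2 ^ ((N^2 : ℕ) / 2 : ℝ) * Real.Gamma ((N^2 : ℕ) / 2 : ℝ))⁻¹ * u ^ ((N^2 : ℕ) / 2 - 1 : ℝ) * f u : ℝ) : ℂ) * Complex.exp (-(z * u) / 2)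
      = z ^ (-(((N^2 : ℕ) / 2 : ℝ) : ℂ)) * DC N n x (z ^ (1/2 : ℂ)) := by
  have hc := wt_c_pos N hN
  set c := (2 ^ ((N^2 : ℕ) / 2 : ℝ) * Real.Gamma ((N^2 : ℕ) / 2 : ℝ))⁻¹ with hcdef
  have hc0 : 0 < c := inv_pos.2 hc
  set k : ℝ → ℝ := fun u => c * u ^ ((N^2 : ℕ) / 2 - 1 : ℝ) * f u with hk
  have hkm : Measurable k := by fun_prop
  have hk0 : ∀ᵐ u ∂(volume.restrict (Set.Ioi (0:ℝ))), 0 ≤ k u := by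
    filter_upwards [ae_restrict_of_ae hf0, ae_restrict_mem measurableSet_Ioi] with u h1 (h2 : 0 < u)
    simp only [hk]
    positivity
  set μ := (volume.restrict (Set.Ioi (0:ℝ))).withDensity (fun u => ENNReal.ofReal (k u)) with hμ
  set X : ℝ → ℝ := fun u => -u/2 with hX
  have hXm : Measurable X := by fun_prop
  have hb1 : ∀ b : ℚ, 0 < b → ∫⁻ u, ENNReal.ofReal (Real.exp (b * X u)) ∂μ = ENNReal.ofReal ((b:ℝ) ^ (-((N^2 : ℕ) / 2 : ℝ)) * Dn N n √b x) := by
    intro b hb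
    have hb' : (0:ℝ) < b := by exact_mod_cast hb
    rw [hμ, lintegral_withDensity_eq_lintegral_mul _ (by fun_prop) (by fun_prop), ENNReal.ofReal_mul (by positivity), ← h b hb, ← lintegral_const_mul']
    · refine setLIntegral_congr_fun measurableSet_Ioi fun u (hu : 0 < u) => ?_
      simp only [Pi.mul_apply]
      rw [← ENNReal.ofReal_mul' (Real.exp_pos _).le]
      have hw : 0 ≤ wt N b u := by
        unfold wt; rw [← hcdef]; positivity
      rw [← ENNReal.ofReal_mul hw, ← ENNReal.ofReal_mul (by positivity)]
      congr 1
      simp only [hk, wt, ← hcdef, hX]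
      have e1 : (b:ℝ) ^ (-((N^2 : ℕ) / 2 : ℝ)) * (b:ℝ) ^ ((N^2 : ℕ) / 2 : ℝ) = 1 := by
        rw [← Real.rpow_add hb']; simp
      have e2 : (b:ℝ) * (-u/2) = -(b * u)/2 := by ring
      rw [e2]
      calc _ = 1 * (c * u ^ ((N^2 : ℕ) / 2 - 1 : ℝ) * f u * Real.exp (-(b * u)/2)) := by ring
        _ = _ := by rw [← e1]; ring
    · exact ENNReal.ofReal_ne_top
  have hint : ∀ b : ℚ, 0 < b → Integrable (fun u => Real.exp (b * X u)) μ := by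
    intro b hb
    refine ⟨by fun_prop, ?_⟩
    rw [hasFiniteIntegral_iff_ofReal (Filter.Eventually.of_forall fun u => (Real.exp_pos _).le), hb1 b hb]
    exact ENNReal.ofReal_lt_top
  have hsub : ∀ t : ℝ, 0 < t → t ∈ interior (integrableExpSet X μ) := by
    intro t ht
    obtain ⟨a, ha0, hat⟩ := exists_rat_btwn ht
    obtain ⟨b, hb0, hbt⟩ := exists_rat_btwn (lt_add_one t)
    have ha0' : 0 < a := by exact_mod_cast ha0
    have hb0' : 0 < b := by exact_mod_cast ht.trans hb0
    have hoc := (convex_integrableExpSet (X := X) (μ := μ)).ordConnected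
    rw [mem_interior]
    exact ⟨Set.Ioo (a:ℝ) b, Set.Ioo_subset_Icc_self.trans (hoc.out (hint a ha0') (hint b hb0')), isOpen_Ioo, hat, hb0⟩
  have hval : ∀ b : ℚ, 0 < b → complexMGF X μ (b:ℝ) = ((b:ℝ):ℂ) ^ (-(((N^2 : ℕ) / 2 : ℝ) : ℂ)) * DC N n x (((b:ℝ):ℂ) ^ (1/2 : ℂ)) := by
    intro b hb
    have hb' : (0:ℝ) < b := by exact_mod_cast hb
    have e1 : (((b:ℝ):ℂ) ^ (1/2 : ℂ)) = ((√b : ℝ) : ℂ) := by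
      rw [Real.sqrt_eq_rpow, Complex.ofReal_cpow hb'.le]; norm_num
    rw [e1, DC_real, ← Complex.ofReal_neg, ← Complex.ofReal_cpow hb'.le, ← Complex.ofReal_mul]
    have := integral_eq_lintegral_of_nonneg_ae (Filter.Eventually.of_forall fun u => (Real.exp_pos _).le) (hint b hb).1
    rw [hb1 b hb, ENNReal.toReal_ofReal (mul_nonneg (by positivity) (Dn_nonneg _ _ _ (Real.sqrt_pos.2 hb') _))] at this
    rw [← this, complexMGF, ← integral_complex_ofReal]
    simp
  have hR : DifferentiableOn ℂ (fun z : ℂ => z ^ (-(((N^2 : ℕ) / 2 : ℝ) : ℂ)) * DC N n x (z ^ (1/2 : ℂ))) {z | 0 < z.re} := by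
    intro w hw
    have hws : w ∈ Complex.slitPlane := Or.inl hw
    refine DifferentiableAt.differentiableWithinAt ?_
    have d1 : ∀ a : ℂ, DifferentiableAt ℂ (fun z : ℂ => z ^ a) w := fun a => differentiableAt_id.cpow (differentiableAt_const a) hws
    exact (d1 _).mul ((DC_diff N n x _).comp w (d1 _))
  have hopen : IsOpen {z : ℂ | 0 < z.re} := isOpen_lt continuous_const Complex.continuous_re
  have hL : DifferentiableOn ℂ (complexMGF X μ) {z | 0 < z.re} :=
    differentiableOn_complexMGF.mono fun w hw => hsub _ hw
  have hpre : IsPreconnected {z : ℂ | 0 < z.re} := (convex_halfSpace_re_gt 0).isPreconnected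
  have key := (hL.analyticOnNhd hopen).eqOn_of_preconnected_of_frequently_eq (hR.analyticOnNhd hopen) hpre (z₀ := 1) (by simp) ?_
  · refine Eq.trans ?_ (key hz)
    rw [complexMGF, hμ, integral_withDensity_eq_integral_toReal_smul (by fun_prop) (Filter.Eventually.of_forall fun _ => ENNReal.ofReal_lt_top)]
    refine integral_congr_ae ?_
    filter_upwards [hk0] with u hu
    rw [ENNReal.toReal_ofReal hu, Complex.real_smul]
    congr 2
    simp only [hX]
    push_cast
    ring
  · have ht : Filter.Tendsto (fun m : ℕ => (((1 + 1/((m:ℚ)+1) : ℚ) : ℝ) : ℂ)) Filter.atTop (nhdsWithin 1 {1}ᶜ) := by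
      rw [tendsto_nhdsWithin_iff]
      constructor
      · have := tendsto_one_div_add_atTop_nhds_zero_nat (𝕜 := ℂ)
        have := this.const_add 1
        simpa using this
      · refine Filter.Eventually.of_forall fun m => ?_
        simp only [Set.mem_compl_iff, Set.mem_singleton_iff]
        intro hh
        have : (1 + 1/((m:ℚ)+1) : ℚ) = 1 := by exact_mod_cast hh
        have h3 : (0:ℚ) < 1/((m:ℚ)+1) := by positivity
        linarith
    refine ht.frequently (Filter.Eventually.frequently (Filter.Eventually.of_forall fun m => ?_))
    exact hval _ (by positivity)

end

section
open MeasureTheory ProbabilityTheory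


lemma cpow_real_mul (r : ℝ) (hr : 0 < r) (z : ℂ) (hz : z ≠ 0) (a : ℂ) : ((r:ℂ) * z) ^ a = (r:ℂ) ^ a * z ^ a := by
  have hr' : (r:ℂ) ≠ 0 := by exact_mod_cast hr.ne'
  rw [Complex.cpow_def_of_ne_zero (mul_ne_zero hr' hz), Complex.cpow_def_of_ne_zero hr', Complex.cpow_def_of_ne_zero hz, Complex.log_ofReal_mul hr hz, ← Complex.exp_add, Complex.ofReal_log hr.le, add_mul]

lemma wt_chi (N : ℕ) (hN : 1 ≤ N) (u : ℝ) (hu : 0 < u) : chiSqPDFscaled (N^2) (1/N) u = wt N N u := by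
  have hN' : (0:ℝ) < N := by positivity
  have h1 : u / (1 / (N:ℝ)) = N * u := by field_simp
  unfold chiSqPDFscaled chiSqPDF wt
  rw [h1, if_pos (by positivity), Real.mul_rpow hN'.le hu.le, Real.rpow_sub_one hN'.ne']
  field_simp

lemma final {N n : ℕ} (hN : 1 ≤ N) (x : Fin n → ℝ) (f : ℝ → ℝ) (Rx : ℝ → ℝ) (hfR : ∀ u, 0 < u → f u = Rx (u / (N:ℝ)^2))
    (h : ∀ z : ℂ, 0 < z.re → ∫ u in Set.Ioi (0:ℝ), (((2 ^ ((N^2 : ℕ) / 2 : ℝ) * Real.Gamma ((N^2 : ℕ) / 2 : ℝ))⁻¹ * u ^ ((N^2 : ℕ) / 2 - 1 : ℝ) * f u : ℝ) : ℂ) * Complex.exp (-(z * u) / 2)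
      = z ^ (-(((N^2 : ℕ) / 2 : ℝ) : ℂ)) * DC N n x (z ^ (1/2 : ℂ)))
    (qx : ℝ → ℝ) (hq : ∀ v : ℝ, qx v =
      if -(N : ℝ) / Real.sqrt 2 < v then
        Rx (1 / N + v * Real.sqrt 2 / (N : ℝ) ^ 2) * Real.sqrt 2 *
          chiSqPDFscaled (N ^ 2) (1 / N) ((N : ℝ) + v * Real.sqrt 2)
      else 0) (p : ℝ) :
      (∫ v : ℝ, Complex.exp (Complex.I * p * v) * (qx v : ℂ)) =
        chiCharFun N p * Matrix.det (fun i j : Fin n =>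
          kernelKt N (x i : ℂ) (x j : ℂ)
            (1 / ((1 - Complex.I * p * Real.sqrt 2 / N) * N))) := by
  have hN' : (0:ℝ) < N := by positivity
  have hNc : (N:ℂ) ≠ 0 := by exact_mod_cast hN'.ne'
  have h2 : (0:ℝ) < √2 := by positivity
  have h2c : ((√2:ℝ):ℂ) ≠ 0 := by exact_mod_cast h2.ne'
  have h22 : ((√2:ℝ):ℂ) * ((√2:ℝ):ℂ) = 2 := by rw [← Complex.ofReal_mul, Real.mul_self_sqrt (by norm_num)]; norm_num
  set a : ℂ := 1 - Complex.I * p * Real.sqrt 2 / N with ha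
  have hare : a.re = 1 := by
    have : a = 1 - Complex.I * ((p * √2 / N : ℝ) : ℂ) := by rw [ha]; push_cast; ring
    rw [this]; simp
  have ha0 : a ≠ 0 := fun h => by rw [h] at hare; simp at hare
  set z : ℂ := a * N with hz
  have hzre : z.re = N := by
    have : z = (N:ℝ) * a := by rw [hz]; push_cast; ring
    rw [this, Complex.re_ofReal_mul, hare, mul_one]
  have hz0 : 0 < z.re := by rw [hzre]; exact hN'
  set G : ℝ → ℂ := fun u => if 0 < u then Complex.exp (Complex.I * p * ((u - N) / √2 : ℝ)) * ((f u * wt N N u : ℝ) : ℂ) else 0 with hG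
  have hint : ∀ v : ℝ, Complex.exp (Complex.I * p * v) * (qx v : ℂ) = (√2 : ℝ) • G (√2 * v + N) := by
    intro v
    have hiff : -(N : ℝ) / Real.sqrt 2 < v ↔ 0 < √2 * v + N := by
      rw [div_lt_iff₀ h2]
      constructor <;> intro h <;> linarith
    simp only [hq, hG, ← hiff]
    split_ifs with hv
    · have hu := hiff.1 hv
      have e1 : (1:ℝ) / N + v * √2 / (N:ℝ)^2 = (√2 * v + N) / (N:ℝ)^2 := by field_simp; ring
      have e2 : (N:ℝ) + v * √2 = √2 * v + N := by ring
      have e3 : (√2 * v + N - N) / √2 = v := by field_simp; ring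
      rw [e1, e2, e3, ← hfR _ hu, wt_chi N hN _ hu, Complex.real_smul]
      push_cast
      ring
    · simp
  simp only [hint]
  rw [integral_smul, Measure.integral_comp_mul_left (fun y => G (y + N)), integral_add_right_eq_self G, abs_of_pos (inv_pos.2 h2), smul_smul, mul_inv_cancel₀ h2.ne', one_smul]
  have e4 : ∫ u, G u = ∫ u in Set.Ioi (0:ℝ), (Complex.exp (-Complex.I * p * N / √2) * (N:ℂ) ^ (((N^2 : ℕ) / 2 : ℝ) : ℂ)) * ((((2 ^ ((N^2 : ℕ) / 2 : ℝ) * Real.Gamma ((N^2 : ℕ) / 2 : ℝ))⁻¹ * u ^ ((N^2 : ℕ) / 2 - 1 : ℝ) * f u : ℝ) : ℂ) * Complex.exp (-(z * u) / 2)) := by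
    rw [← integral_indicator measurableSet_Ioi]
    refine integral_congr_ae (Filter.Eventually.of_forall fun u => ?_)
    simp only [hG, Set.indicator, Set.mem_Ioi]
    split_ifs with hu
    · have e5 : Complex.exp (Complex.I * p * ((u - N) / √2 : ℝ)) * ((Real.exp (-(N * u)/2) : ℝ) : ℂ) = Complex.exp (-Complex.I * p * N / √2) * Complex.exp (-(z * u) / 2) := by
        rw [Complex.ofReal_exp, ← Complex.exp_add, ← Complex.exp_add]
        congr 1
        rw [hz, ha]
        push_cast
        have : ((√2:ℝ):ℂ)⁻¹ = ((√2:ℝ):ℂ) / 2 := by rw [← h22]; field_simp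
        rw [div_eq_mul_inv _ ((√2:ℝ):ℂ), div_eq_mul_inv _ ((√2:ℝ):ℂ), this]
        field_simp
        ring
      have e6 : (N:ℂ) ^ (((N^2 : ℕ) / 2 : ℝ) : ℂ) = (((N:ℝ) ^ ((N^2 : ℕ) / 2 : ℝ) : ℝ) : ℂ) := by
        rw [Complex.ofReal_cpow hN'.le]; simp
      rw [e6, wt]
      generalize (2 ^ ((N^2 : ℕ) / 2 : ℝ) * Real.Gamma ((N^2 : ℕ) / 2 : ℝ))⁻¹ = c
      generalize u ^ ((N^2 : ℕ) / 2 - 1 : ℝ) = d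
      generalize (N:ℝ) ^ ((N^2 : ℕ) / 2 : ℝ) = e
      generalize f u = y
      calc _ = ((y * c * e * d : ℝ) : ℂ) * (Complex.exp (Complex.I * p * ((u - N) / √2 : ℝ)) * ((Real.exp (-(N * u)/2) : ℝ) : ℂ)) := by
            push_cast; ring
        _ = _ := by rw [e5]; push_cast; ring
    · rfl
  rw [e4, integral_const_mul, h z hz0]
  have e7 : (N:ℂ) ^ (((N^2 : ℕ) / 2 : ℝ) : ℂ) * z ^ (-(((N^2 : ℕ) / 2 : ℝ) : ℂ)) = a ^ (-(N:ℂ)^2/2) := by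
    have : z = ((N:ℝ):ℂ) * a := by rw [hz]; push_cast; ring
    rw [this, cpow_real_mul _ hN' _ ha0, ← mul_assoc, Complex.ofReal_natCast, ← Complex.cpow_add _ _ hNc]
    simp [neg_div]
  have e8 : (1/z) ^ (-(1:ℂ)/2) = z ^ (1/2 : ℂ) := by
    rw [one_div, Complex.inv_cpow, neg_div, Complex.cpow_neg, inv_inv]
    intro hh
    rw [Complex.arg_eq_pi_iff] at hh
    linarith [hh.1]
  have e9 : DC N n x (z ^ (1/2 : ℂ)) = Matrix.det (fun i j : Fin n => kernelKt N (x i : ℂ) (x j : ℂ) (1 / z)) := by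
    simp only [DC, kernelKt, e8]
    rfl
  rw [← e9, chiCharFun, ← e7]
  ring

end

theorem fourier_transform_identity
    (N n : ℕ) (hN : 1 ≤ N) (hn : 1 ≤ n) (hnN : n ≤ N)
    (ν : ℝ → Measure (HermMat N)) (hν : ∀ s : ℝ, 0 < s → IsHSE s (ν s))
    (R : ℝ → (Fin n → ℝ) → ℝ)
    (hRmeas : Measurable (fun q : {p : ℝ × (Fin n → ℝ) // 0 < p.1} => R q.1.1 q.1.2))
    (hRdens : ∀ s : ℝ, 0 < s → ∀ B : Set (Fin n → ℝ), MeasurableSet B →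
      corrMass n (ν s) B = ∫ x in B, R s x)
    (q : ℝ → (Fin n → ℝ) → ℝ)
    (hq : ∀ v : ℝ, ∀ x : Fin n → ℝ, q v x =
      if -(N : ℝ) / Real.sqrt 2 < v then
        R (1 / N + v * Real.sqrt 2 / (N : ℝ) ^ 2) x * Real.sqrt 2 *
          chiSqPDFscaled (N ^ 2) (1 / N) ((N : ℝ) + v * Real.sqrt 2)
      else 0) :
    ∀ᵐ x : Fin n → ℝ ∂(volume : Measure (Fin n → ℝ)), ∀ p : ℝ,
      (∫ v : ℝ, Complex.exp (Complex.I * p * v) * (q v x : ℂ)) =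
        chiCharFun N p * Matrix.det (fun i j : Fin n =>
          kernelKt N (x i : ℂ) (x j : ℂ)
            (1 / ((1 - Complex.I * p * Real.sqrt 2 / N) * N))) := by
  filter_upwards [stage1 hN hnN ν hν R hRmeas hRdens] with x hx p
  obtain ⟨f, hf, hfR, hf0, hb⟩ := hx
  exact final hN x f (fun s => R s x) hfR (fun z hz => stage2 hN x f hf hf0 hb z hz) (fun v => q v x) (fun v => hq v x) p

end
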